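/- Assume that every planar 4-connected triangulation on m vertices admits a CDC of size at most m−2. Then every plane triangulation T satisfies c(T) ≤ 3·|𝒫_{K₄}(T)| + Σ_{G ∈ 𝒫₄(T)} (|V(G)| − 2), where 𝒫_{K₄}(T) and 𝒫₄(T) denote the sets of pieces of the decomposition tree of T isomorphic to K₄ and 4-connected, respectively. -/

import Mathlib

/-!
Cycle double covers of two graphs sharing a triangle `Δ` can be glued without gaining cycles.
If one of them contains `Δ` twice, drop both copies. Otherwise some of the cycles of one cover can
be paired with cycles of the other so that each edge of `Δ` is common to exactly one pair;
replacing each pair by its symmetric difference lowers the multiplicity of the edges of `Δ` from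
four to two. Two paired cycles have at most three common vertices and share an edge, so their
symmetric difference is the sum of at most two cycles.

Hence it suffices to cover the pieces of the decomposition tree. Both parts of a split satisfy the
bound `3n - 6` on the number of edges (Mader's bound for graphs without `K₅` minor) and these
bounds add up to an equality, so every piece is a triangulation. A triangulation without separating
triangle is `K₄`, covered by its three Hamiltonian cycles, or it is `4`-connected, since otherwise
applying the edge bound to both sides of a small separator contradicts the number of edges.
-/

open SimpleGraph

attribute [local instance] Classical.propDecidable

/-- A cycle in a graph: a connected, 2-regular subgraph. -/
def IsCycleSubgraph {V : Type*} {G : SimpleGraph V} (C : G.Subgraph) : Prop :=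
  C.coe.Connected ∧ ∀ v ∈ C.verts, (C.neighborSet v).ncard = 2

/-- A cycle double cover: a multiset of cycles covering every edge exactly twice
(counted with multiplicity). -/
def IsCDC {V : Type*} (G : SimpleGraph V) (S : Multiset G.Subgraph) : Prop :=
  (∀ C ∈ S, IsCycleSubgraph C) ∧
  ∀ e ∈ G.edgeSet, S.countP (fun C => e ∈ C.edgeSet) = 2

/-- Graph minor relation (via branch sets). -/
def HasGraphMinor {V : Type*} {W : Type*} (G : SimpleGraph V) (H : SimpleGraph W) : Prop :=
  ∃ f : W → Set V,
    (∀ w, (f w).Nonempty) ∧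
    (∀ w, (G.induce (f w)).Connected) ∧
    (Pairwise fun w₁ w₂ => Disjoint (f w₁) (f w₂)) ∧
    ∀ ⦃w₁ w₂⦄, H.Adj w₁ w₂ → ∃ v₁ ∈ f w₁, ∃ v₂ ∈ f w₂, G.Adj v₁ v₂

/-- Planarity, via Wagner's theorem: no `K₅` minor and no `K_{3,3}` minor. -/
def IsPlanar {V : Type*} (G : SimpleGraph V) : Prop :=
  ¬ HasGraphMinor G (completeGraph (Fin 5)) ∧
  ¬ HasGraphMinor G (completeBipartiteGraph (Fin 3) (Fin 3))

/-- `k`-connectivity: more than `k` vertices, and removing fewer than `k`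
vertices leaves a connected graph. -/
def IsKConnected {V : Type*} [Fintype V] (k : ℕ) (G : SimpleGraph V) : Prop :=
  k < Fintype.card V ∧ ∀ s : Set V, s.ncard < k → (G.induce sᶜ).Connected

/-- A Hamiltonian cycle: a cycle through all vertices. -/
def IsHamCycle {V : Type*} (G : SimpleGraph V) (C : G.Subgraph) : Prop :=
  IsCycleSubgraph C ∧ C.verts = Set.univ
/-- A (plane) triangulation, combinatorially: a maximal planar graph, i.e. a planar graph
on `n ≥ 3` vertices with exactly `3n - 6` edges (equivalently, every face is a triangle). -/
def IsTriangulation {V : Type*} [Fintype V] (G : SimpleGraph V) : Prop :=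
  IsPlanar G ∧ 3 ≤ Fintype.card V ∧ G.edgeSet.ncard + 6 = 3 * Fintype.card V

/-- A separating triangle: three pairwise adjacent vertices whose removal disconnects
the graph. -/
def HasSepTriangle {α : Type*} (H : SimpleGraph α) : Prop :=
  ∃ u v w : α, H.Adj u v ∧ H.Adj v w ∧ H.Adj u w ∧
    ¬ (H.induce {x | x ≠ u ∧ x ≠ v ∧ x ≠ w}).Connected

/-- The minimum size of a cycle double cover of `G` (`⊤` if `G` has none). -/
noncomputable def cdcMin {V : Type*} (G : SimpleGraph V) : ℕ∞ :=
  sInf {n : ℕ∞ | ∃ S : Multiset G.Subgraph, IsCDC G S ∧ (Multiset.card S : ℕ∞) = n}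

/-- `IsPieceDecomp T s P` : `P` is the multiset of (vertex sets of) pieces of the
decomposition of the triangulation `T.induce s` obtained by successively splitting along
separating triangles (retaining a copy of the separating triangle in each part), until no
piece has a separating triangle. -/
inductive IsPieceDecomp {V : Type*} (T : SimpleGraph V) :
    Finset V → Multiset (Finset V) → Prop
  | base (s : Finset V) :
      ¬ HasSepTriangle (T.induce (s : Set V)) → IsPieceDecomp T s {s}
  | split (s a b : Finset V) (P Q : Multiset (Finset V)) :
      a ∪ b = s → a ≠ s → b ≠ s →
      (a ∩ b).card = 3 →
      (∀ u ∈ a ∩ b, ∀ v ∈ a ∩ b, u ≠ v → T.Adj u v) →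
      (∀ u ∈ a, ∀ v ∈ b, T.Adj u v → u ∈ b ∨ v ∈ a) →
      IsPieceDecomp T a P → IsPieceDecomp T b Q →
      IsPieceDecomp T s (P + Q)

/-! ### Connectedness and minors -/

lemma induce_connected_iff {V : Type*} {G : SimpleGraph V} {s : Set V} :
    (G.induce s).Connected ↔ s.Nonempty ∧ ∀ K ⊆ s, K.Nonempty →
      (∀ x ∈ K, ∀ y ∈ s, G.Adj x y → y ∈ K) → s ⊆ K := by
  constructor
  · intro h
    refine ⟨Set.nonempty_coe_sort.1 h.nonempty, fun K hKs ⟨x, hx⟩ hK y hy => ?_⟩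
    by_contra hyK
    obtain ⟨p⟩ := h.preconnected ⟨x, hKs hx⟩ ⟨y, hy⟩
    obtain ⟨d, -, hd, hd'⟩ := p.exists_boundary_dart (Subtype.val ⁻¹' K) hx hyK
    exact hd' (hK _ hd _ d.snd.2 d.adj)
  · rintro ⟨⟨v, hv⟩, h⟩
    rw [connected_iff_exists_forall_reachable]
    refine ⟨⟨v, hv⟩, fun ⟨y, hy⟩ => ?_⟩
    have hclosed := h {x | ∃ hx : x ∈ s, (G.induce s).Reachable ⟨v, hv⟩ ⟨x, hx⟩}
      (fun x hx => hx.1) ⟨v, hv, .rfl⟩ fun x ⟨hx, hr⟩ z hz hxz =>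
        ⟨hz, hr.trans (Adj.reachable hxz)⟩
    exact (hclosed hy).2

lemma induce_singleton_connected {V : Type*} (G : SimpleGraph V) (v : V) :
    (G.induce {v}).Connected := by
  rw [induce_singleton_eq_top, connected_top_iff]
  exact ⟨⟨v, rfl⟩⟩

lemma induce_biUnion_connected {U V : Type*} {G : SimpleGraph U} {H : SimpleGraph V}
    {g : V → Set U} {s : Set V} (hs : (H.induce s).Connected)
    (hg : ∀ v ∈ s, (G.induce (g v)).Connected)
    (hadj : ∀ ⦃v w⦄, H.Adj v w → ∃ x ∈ g v, ∃ y ∈ g w, G.Adj x y) :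
    (G.induce (⋃ v ∈ s, g v)).Connected := by
  obtain ⟨⟨v, hv⟩, hs⟩ := induce_connected_iff.1 hs
  obtain ⟨x, hx⟩ := (induce_connected_iff.1 (hg v hv)).1
  refine induce_connected_iff.2 ⟨⟨x, Set.mem_biUnion hv hx⟩, fun K hK hKn hKc => ?_⟩
  have meets_imp_subset : ∀ v ∈ s, (g v ∩ K).Nonempty → g v ⊆ K := fun v hv hne =>
    ((induce_connected_iff.1 (hg v hv)).2 (g v ∩ K) Set.inter_subset_left hne
      fun x hx y hy hxy => ⟨hy, hKc x hx.2 y (Set.mem_biUnion hv hy) hxy⟩).trans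
      Set.inter_subset_right
  refine Set.iUnion₂_subset fun v hv => (hs {v ∈ s | g v ⊆ K} (Set.sep_subset _ _) ?_ ?_ hv).2
  · obtain ⟨x, hx⟩ := hKn
    obtain ⟨v, hv, hxv⟩ := Set.mem_iUnion₂.1 (hK hx)
    exact ⟨v, hv, meets_imp_subset v hv ⟨x, hxv, hx⟩⟩
  · rintro a ⟨-, hag⟩ b hb hab
    obtain ⟨x, hx, y, hy, hxy⟩ := hadj hab
    exact ⟨hb, meets_imp_subset b hb ⟨y, hy, hKc x (hag hx) y (Set.mem_biUnion hb hy) hxy⟩⟩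

lemma HasGraphMinor.trans {U V W : Type*} {G : SimpleGraph U} {H : SimpleGraph V}
    {K : SimpleGraph W} (h₁ : HasGraphMinor G H) (h₂ : HasGraphMinor H K) :
    HasGraphMinor G K := by
  obtain ⟨g, gn, gc, gd, ga⟩ := h₁
  obtain ⟨f, fn, fc, fd, fa⟩ := h₂
  refine ⟨fun w => ⋃ v ∈ f w, g v, fun w => ?_, fun w => ?_, fun w₁ w₂ hw => ?_,
    fun w₁ w₂ hw => ?_⟩
  · obtain ⟨v, hv⟩ := fn w
    obtain ⟨x, hx⟩ := gn v
    exact ⟨x, Set.mem_biUnion hv hx⟩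
  · exact induce_biUnion_connected (fc w) (fun v _ => gc v) ga
  · exact Set.disjoint_iUnion₂_left.2 fun v hv => Set.disjoint_iUnion₂_right.2 fun v' hv' =>
      gd ((fd hw).ne_of_mem hv hv')
  · obtain ⟨v₁, hv₁, v₂, hv₂, hv⟩ := fa hw
    obtain ⟨x, hx, y, hy, hxy⟩ := ga hv
    exact ⟨x, Set.mem_biUnion hv₁ hx, y, Set.mem_biUnion hv₂ hy, hxy⟩

lemma HasGraphMinor.of_injective {U V : Type*} {G : SimpleGraph U} {H : SimpleGraph V}
    (f : H →g G) (hf : Function.Injective f) : HasGraphMinor G H :=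
  ⟨fun v => {f v}, fun _ => ⟨_, rfl⟩, fun _ => induce_singleton_connected _ _,
    fun _ _ hab => Set.disjoint_singleton.2 (hf.ne hab),
    fun _ _ hab => ⟨_, rfl, _, rfl, f.map_adj hab⟩⟩

lemma hasGraphMinor_induce {V : Type*} (G : SimpleGraph V) (A : Set V) :
    HasGraphMinor G (G.induce A) :=
  .of_injective (Embedding.induce A).toHom Subtype.val_injective

lemma IsPlanar.of_minor {U V : Type*} {G : SimpleGraph U} {H : SimpleGraph V} (hG : IsPlanar G)
    (h : HasGraphMinor G H) : IsPlanar H :=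
  ⟨fun h' => hG.1 (h.trans h'), fun h' => hG.2 (h.trans h')⟩

/-- The star with centre `w` and leaves `S \ {w}`, added to a graph to describe the contraction of
a connected set with neighbourhood `S` into `w`. -/
def starOn {V : Type*} (w : V) (S : Set V) : SimpleGraph V :=
  .fromRel fun x y => x = w ∧ y ∈ S

lemma hasGraphMinor_induce_sup_starOn {V : Type*} {G : SimpleGraph V} {A K S : Set V} {w : V}
    (hAK : Disjoint A K) (hK : (G.induce K).Connected) (hw : ∃ k ∈ K, G.Adj w k)
    (hS : ∀ y ∈ S, ∃ k ∈ K, G.Adj y k) :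
    HasGraphMinor G ((G ⊔ starOn w S).induce A) := by
  have mem_branch (x : V) : x ∈ {x} ∪ {z ∈ K | x = w} := Or.inl rfl
  have connected_branch (x : V) : (G.induce ({x} ∪ {z ∈ K | x = w})).Connected := by
    obtain rfl | h := eq_or_ne x w
    · obtain ⟨k, hk, hxk⟩ := hw
      have hall : {z ∈ K | x = x} = K := by simp
      rw [hall]
      exact connected_induce_union (induce_singleton_connected G x).preconnected
        hK.preconnected rfl hk hxk
    · have hempty : {z ∈ K | x = w} = ∅ := by simp [h]
      rw [hempty, Set.union_empty]
      exact induce_singleton_connected G x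
  refine ⟨fun x => {(x : V)} ∪ {z ∈ K | (x : V) = w}, fun x => ⟨x, mem_branch x⟩,
    fun x => connected_branch x, fun x y hxy => ?_, fun x y hxy => ?_⟩
  · have hxK := Set.disjoint_left.1 hAK x.2
    have hyK := Set.disjoint_left.1 hAK y.2
    have hne : (x : V) ≠ y := Subtype.coe_ne_coe.2 hxy
    exact Set.disjoint_left.2 (by grind)
  · rcases hxy with hxy | ⟨-, ⟨hx, hy⟩ | ⟨hy, hx⟩⟩
    · exact ⟨x, mem_branch x, y, mem_branch y, hxy⟩
    · obtain ⟨k, hk, hyk⟩ := hS _ hy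
      exact ⟨k, Or.inr ⟨hk, hx⟩, y, mem_branch y, hyk.symm⟩
    · obtain ⟨k, hk, hxk⟩ := hS _ hx
      exact ⟨x, mem_branch x, k, Or.inr ⟨hk, hy⟩, hxk⟩

/-! ### Edges inside a vertex set -/

/-- The edges of `G` with both ends in `A`, as a set of edges of `G` rather than of `G.induce A`,
so that the edge sets of different parts of `G` can be compared. -/
def edgesOn {V : Type*} (G : SimpleGraph V) (A : Set V) : Set (Sym2 V) :=
  G.edgeSet ∩ A.sym2

/-- `(A, B)` is a separation of `G[A ∪ B]`: no edge joins `A \ B` to `B \ A`. -/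
def IsSeparation {V : Type*} (G : SimpleGraph V) (A B : Set V) : Prop :=
  ∀ u ∈ A, ∀ v ∈ B, G.Adj u v → u ∈ B ∨ v ∈ A

section edgesOn

variable {V : Type*} {G : SimpleGraph V} {A B : Set V}

lemma mk_mem_edgesOn {u v : V} : s(u, v) ∈ edgesOn G A ↔ G.Adj u v ∧ u ∈ A ∧ v ∈ A :=
  and_congr_right' Set.mk_mem_sym2_iff

variable (G) in
lemma edgesOn_univ : edgesOn G Set.univ = G.edgeSet := by
  rw [edgesOn, Set.sym2_univ, Set.inter_univ]

lemma edgesOn_inter : edgesOn G (A ∩ B) = edgesOn G A ∩ edgesOn G B := by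
  rw [edgesOn, edgesOn, edgesOn, Set.sym2_inter, Set.inter_inter_distrib_left]

lemma IsSeparation.edgesOn_union (h : IsSeparation G A B) :
    edgesOn G (A ∪ B) = edgesOn G A ∪ edgesOn G B := by
  ext ⟨x, y⟩
  have hxy := h x
  have hyx := h y
  simp only [mk_mem_edgesOn, Set.mem_union]
  grind [G.adj_comm x y]

variable (G A) in
lemma image_edgeSet_induce : Sym2.map (↑) '' (G.induce A).edgeSet = edgesOn G A := by
  ext ⟨x, y⟩
  rw [mk_mem_edgesOn]
  constructor
  · rintro ⟨⟨a, b⟩, hab, h⟩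
    rcases Sym2.eq_iff.1 h with ⟨rfl, rfl⟩ | ⟨rfl, rfl⟩
    exacts [⟨hab, a.2, b.2⟩, ⟨hab.symm, b.2, a.2⟩]
  · rintro ⟨hxy, hx, hy⟩
    exact ⟨s(⟨x, hx⟩, ⟨y, hy⟩), hxy, rfl⟩

variable (G A) in
lemma ncard_edgeSet_induce : (G.induce A).edgeSet.ncard = (edgesOn G A).ncard := by
  rw [← image_edgeSet_induce,
    Set.ncard_image_of_injective _ (Sym2.map.injective Subtype.val_injective)]

variable [Finite V]

lemma IsSeparation.ncard_edgesOn_union (h : IsSeparation G A B) :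
    (edgesOn G (A ∪ B)).ncard + (edgesOn G (A ∩ B)).ncard =
      (edgesOn G A).ncard + (edgesOn G B).ncard := by
  rw [h.edgesOn_union, edgesOn_inter]
  exact Set.ncard_union_add_ncard_inter _ _

lemma ncard_edgesOn_le_choose_two : (edgesOn G A).ncard ≤ A.ncard.choose 2 := by
  have := Fintype.ofFinite A
  rw [← ncard_edgeSet_induce, ← coe_edgeFinset, Set.ncard_coe_finset, ← Nat.card_coe_set_eq,
    Nat.card_eq_fintype_card]
  exact card_edgeFinset_le_card_choose_two

lemma ncard_edgesOn_of_isClique (hA : G.IsClique A) :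
    (edgesOn G A).ncard = A.ncard.choose 2 := by
  have := Fintype.ofFinite A
  rw [← ncard_edgeSet_induce, induce_eq_top.2 hA, ← coe_edgeFinset, Set.ncard_coe_finset,
    card_edgeFinset_top_eq_card_choose_two, ← Nat.card_eq_fintype_card, Nat.card_coe_set_eq]

lemma ncard_edgesOn_add_missing_le {S : Set V} {w : V} (hw : w ∈ A) (hS : S ⊆ A) :
    (edgesOn G A).ncard + (S \ insert w (G.neighborSet w)).ncard ≤
      (edgesOn (G ⊔ starOn w S) A).ncard := by
  have hinj : Function.Injective (s(w, ·)) := fun _ _ h => Sym2.congr_right.1 h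
  rw [← Set.ncard_image_of_injective (S \ insert w (G.neighborSet w)) hinj,
    ← Set.ncard_union_eq]
  · refine Set.ncard_le_ncard (Set.union_subset ?_ ?_)
    · exact Set.inter_subset_inter_left _ (edgeSet_mono le_sup_left)
    · rintro _ ⟨y, ⟨hyS, hy⟩, rfl⟩
      have hwy : w ≠ y := fun h => hy (.inl h.symm)
      exact mk_mem_edgesOn.2 ⟨.inr ⟨hwy, .inl ⟨rfl, hyS⟩⟩, hw, hS hyS⟩
  · rw [Set.disjoint_right]
    rintro _ ⟨y, ⟨-, hy⟩, rfl⟩ he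
    exact hy (.inr he.1)

variable (G) in
lemma ncard_edgeSet_eq_compl_singleton_add (v : V) :
    G.edgeSet.ncard = (edgesOn G {v}ᶜ).ncard + (G.neighborSet v).ncard := by
  have hinj : Function.Injective (s(v, ·)) := fun _ _ h => Sym2.congr_right.1 h
  rw [← Set.ncard_image_of_injective (G.neighborSet v) hinj, ← Set.ncard_union_eq]
  · congr 1
    ext ⟨x, y⟩
    simp only [Set.mem_union, mk_mem_edgesOn, Set.mem_image, mem_neighborSet, mem_edgeSet,
      Set.mem_compl_iff, Set.mem_singleton_iff, Sym2.eq_iff]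
    grind [G.adj_comm x y]
  · rw [Set.disjoint_right]
    rintro _ ⟨y, -, rfl⟩ he
    exact (mk_mem_edgesOn.1 he).2.1 rfl

end edgesOn

/-! ### Mader's bound for graphs without a `K₅` minor -/

/-- `G` has a `K₅` minor; excluding it is all that edge counting needs of planarity. -/
abbrev HasK5Minor {V : Type*} (G : SimpleGraph V) : Prop :=
  HasGraphMinor G (completeGraph (Fin 5))

section Mader

variable {V : Type*} {G : SimpleGraph V}

lemma hasK5Minor_induce_of_isNClique {s : Finset V} (h : G.IsNClique 5 s) :
    HasK5Minor (G.induce (s : Set V)) := by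
  rw [induce_eq_top.2 h.isClique]
  exact .of_injective (Iso.completeGraph (s.equivFinOfCardEq h.card_eq).symm).toHom
    (s.equivFinOfCardEq h.card_eq).symm.injective

/-- Contracting `a₁b₁` turns `v`, `a₁b₁`, `a₂`, `b₂`, `c` into a `K₅`. -/
lemma hasK5Minor_of_wheel {v a₁ a₂ b₁ b₂ c : V} (hv : ∀ x ∈ [a₁, a₂, b₁, b₂, c], G.Adj v x)
    (hnodup : [a₁, a₂, b₁, b₂, c].Nodup) (h₁ : ∀ x ∈ [b₁, b₂, c], G.Adj a₁ x)
    (h₂ : ∀ x ∈ [b₁, b₂, c], G.Adj a₂ x) (hbc : G.Adj b₂ c) : HasK5Minor G := by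
  simp only [List.nodup_cons, List.mem_cons, List.not_mem_nil] at hnodup hv h₁ h₂
  have hle : ∀ {x y}, G.Adj x y → (G ⊔ starOn a₁ {a₂}).Adj x y := .inl
  have ha : (G ⊔ starOn a₁ {a₂}).Adj a₁ a₂ := .inr ⟨by grind, .inl ⟨rfl, rfl⟩⟩
  have hclique : (G ⊔ starOn a₁ {a₂}).IsNClique 5 {v, a₁, a₂, b₂, c} := by
    refine ((((isNClique_one.2 ⟨c, rfl⟩).insert (a := b₂) ?_).insert ?_).insert ?_).insert ?_
    all_goals simp only [Finset.mem_insert, Finset.mem_singleton]; grind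
  refine (hasGraphMinor_induce_sup_starOn (K := {b₁}) (S := {a₂}) ?_
    (induce_singleton_connected G b₁) ⟨b₁, rfl, h₁ b₁ (.inl rfl)⟩ ?_).trans
    (hasK5Minor_induce_of_isNClique hclique)
  · have hvb := (hv b₁ (by simp)).ne
    simp only [Finset.coe_insert, Finset.coe_singleton, Set.disjoint_singleton_right,
      Set.mem_insert_iff, Set.mem_singleton_iff]
    grind
  · rintro _ rfl
    exact ⟨b₁, rfl, h₂ b₁ (.inl rfl)⟩

lemma ncard_neighborSet_eq_commonNeighbors [Finite V] {v u : V} (h : G.Adj v u) :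
    (G.neighborSet v).ncard = (G.commonNeighbors v u).ncard + 1 +
      (G.neighborSet v \ insert u (G.neighborSet u)).ncard := by
  rw [← Set.ncard_inter_add_ncard_sdiff_eq_ncard _ (insert u (G.neighborSet u)),
    Set.inter_insert_of_mem (show u ∈ G.neighborSet v from h), ← commonNeighbors,
    Set.ncard_insert_of_notMem (G.notMem_commonNeighbors_right v u)]

lemma hasK5Minor_of_neighborSet_isClique [Finite V] {v : V}
    (hcard : 4 ≤ (G.neighborSet v).ncard) (h : G.IsClique (G.neighborSet v)) : HasK5Minor G := by
  obtain ⟨s, hs, hs4⟩ := Set.exists_subset_card_eq hcard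
  lift s to Finset V using s.toFinite
  rw [Set.ncard_coe_finset] at hs4
  have hclique : G.IsNClique 4 s := ⟨h.subset hs, hs4⟩
  exact (hasGraphMinor_induce G _).trans
    (hasK5Minor_induce_of_isNClique (hclique.insert (a := v) fun y hy => hs hy))

lemma hasK5Minor_of_ncard_neighborSet_eq_five [Finite V] {v : V}
    (h5 : (G.neighborSet v).ncard = 5)
    (hmiss : ∀ u ∈ G.neighborSet v, (G.neighborSet v \ insert u (G.neighborSet u)).ncard ≤ 1) :
    HasK5Minor G := by
  by_cases hclique : G.IsClique (G.neighborSet v)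
  · exact hasK5Minor_of_neighborSet_isClique (by omega) hclique
  obtain ⟨a₁, ha₁, a₂, ha₂, hne, hna⟩ :
      ∃ a₁ ∈ G.neighborSet v, ∃ a₂ ∈ G.neighborSet v, a₁ ≠ a₂ ∧ ¬ G.Adj a₁ a₂ := by
    simpa [isClique_iff, Set.Pairwise] using hclique
  have adj_or_adj (u) (hu : G.Adj v u) (x) (hx : G.Adj v x) (y) (hy : G.Adj v y) (hux : u ≠ x)
      (huy : u ≠ y) (hxy : x ≠ y) : G.Adj u x ∨ G.Adj u y := by
    by_contra! hcon
    exact hxy ((Set.ncard_le_one_iff).1 (hmiss u hu) ⟨hx, by simp [hux.symm, hcon.1]⟩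
      ⟨hy, by simp [huy.symm, hcon.2]⟩)
  have hthree : ((G.neighborSet v \ {a₁}) \ {a₂}).ncard = 3 := by
    have ha₂' : a₂ ∈ G.neighborSet v \ {a₁} := ⟨ha₂, hne.symm⟩
    rw [Set.ncard_sdiff_singleton_of_mem ha₂', Set.ncard_sdiff_singleton_of_mem ha₁, h5]
  obtain ⟨x, y, z, hxy, hxz, hyz, hR⟩ := Set.ncard_eq_three.1 hthree
  have hmem (t) : t ∈ ({x, y, z} : Set V) → (G.Adj v t ∧ t ≠ a₁) ∧ t ≠ a₂ := fun ht => by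
    rwa [← hR] at ht
  have hx := hmem x (by simp)
  have hy := hmem y (by simp)
  have hz := hmem z (by simp)
  rw [mem_neighborSet] at ha₁ ha₂
  have hna' : ¬ G.Adj a₂ a₁ := fun h => hna h.symm
  rcases adj_or_adj x hx.1.1 y hy.1.1 z hz.1.1 hxy hxz hyz with h | h
  · refine hasK5Minor_of_wheel (v := v) (a₁ := a₁) (a₂ := a₂) (b₁ := z) ?_ ?_ ?_ ?_ h
    all_goals grind
  · refine hasK5Minor_of_wheel (v := v) (a₁ := a₁) (a₂ := a₂) (b₁ := y) ?_ ?_ ?_ ?_ h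
    all_goals grind

lemma hasK5Minor_of_commonNeighbors [Finite V] {v : V} (hv : (G.neighborSet v).Nonempty)
    (h5 : (G.neighborSet v).ncard ≤ 5)
    (h3 : ∀ u ∈ G.neighborSet v, 3 ≤ (G.commonNeighbors v u).ncard) : HasK5Minor G := by
  have hcard (u) (hu : u ∈ G.neighborSet v) :
      4 + (G.neighborSet v \ insert u (G.neighborSet u)).ncard ≤ (G.neighborSet v).ncard := by
    rw [ncard_neighborSet_eq_commonNeighbors hu]
    have := h3 u hu
    omega
  obtain ⟨w, hw⟩ := hv
  have h4 := hcard w hw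
  obtain hfour | hfive : (G.neighborSet v).ncard = 4 ∨ (G.neighborSet v).ncard = 5 := by omega
  · refine hasK5Minor_of_neighborSet_isClique hfour.ge fun x hx y hy hxy => ?_
    have hmiss : (G.neighborSet v \ insert x (G.neighborSet x)).ncard = 0 := by
      have := hcard x hx
      omega
    have hsub := Set.sdiff_eq_empty.1 ((Set.ncard_eq_zero).1 hmiss)
    exact (hsub hy).resolve_left hxy.symm
  · refine hasK5Minor_of_ncard_neighborSet_eq_five hfive fun u hu => ?_
    have := hcard u hu
    omega

lemma exists_le_ncard_edgeSet_eq [Finite V] {n : ℕ} (h : n ≤ G.edgeSet.ncard) :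
    ∃ H ≤ G, H.edgeSet.ncard = n := by
  obtain ⟨E, hE, hEn⟩ := Set.exists_subset_card_eq h
  have hdiag : Disjoint E Sym2.diagSet :=
    Set.disjoint_left.2 fun e he => G.not_isDiag_of_mem_edgeSet (hE he)
  refine ⟨fromEdgeSet E, (fromEdgeSet_mono hE).trans_eq G.fromEdgeSet_edgeSet, ?_⟩
  rw [edgeSet_fromEdgeSet, sdiff_eq_left.2 hdiag, hEn]

lemma exists_ncard_neighborSet_le [Finite V] {k : ℕ}
    (h : 2 * G.edgeSet.ncard < (k + 1) * Nat.card V) : ∃ v, (G.neighborSet v).ncard ≤ k := by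
  have := Fintype.ofFinite V
  by_contra! hlt
  have hdegree (v) : G.degree v = (G.neighborSet v).ncard := by
    rw [← card_neighborSet_eq_degree, ← Nat.card_eq_fintype_card, Nat.card_coe_set_eq]
  have hsum : ∑ _v : V, (k + 1) ≤ ∑ v, G.degree v :=
    Finset.sum_le_sum fun v _ => (hlt v).trans_eq (hdegree v).symm
  rw [G.sum_degrees_eq_twice_card_edges, ← Set.ncard_coe_finset, coe_edgeFinset,
    Finset.sum_const, smul_eq_mul, Finset.card_univ, ← Nat.card_eq_fintype_card, mul_comm] at hsum
  omega

/-- Mader's bound. In a minimal counterexample with one edge too many, deleting a vertex leaves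
at least four neighbours, and contracting an edge loses at least four edges, so that every edge
lies in three triangles; a vertex of degree at most five then yields the minor. -/
theorem ncard_edgeSet_add_six_le [Finite V] (hG : ¬ HasK5Minor G) (hV : 3 ≤ Nat.card V) :
    G.edgeSet.ncard + 6 ≤ 3 * Nat.card V := by
  induction hn : Nat.card V generalizing V with
  | zero => omega
  | succ n ih =>
  obtain hsmall | hlarge := Nat.lt_or_ge n 4
  · have hchoose : G.edgeSet.ncard ≤ (n + 1).choose 2 := by
      rw [← hn, ← edgesOn_univ, ← Set.ncard_univ]
      exact ncard_edgesOn_le_choose_two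
    have hsix : (n + 1).choose 2 + 6 = 3 * (n + 1) := by
      have : 2 ≤ n := by omega
      interval_cases n <;> rfl
    omega
  by_contra! hlt
  obtain ⟨H, hHG, hH⟩ := exists_le_ncard_edgeSet_eq (G := G) (n := 3 * n - 2) (by omega)
  have hK5 : ¬ HasK5Minor H := fun h =>
    hG ((HasGraphMinor.of_injective (.ofLE hHG) Function.injective_id).trans h)
  obtain ⟨v, hv⟩ := exists_ncard_neighborSet_le (G := H) (k := 5) (by omega)
  have hcompl : Nat.card ({v}ᶜ : Set V) = n := by
    rw [Nat.card_coe_set_eq, Set.ncard_compl, hn, Set.ncard_singleton, Nat.add_sub_cancel]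
  have bound (H' : SimpleGraph V) (h : HasGraphMinor H (H'.induce {v}ᶜ)) :
      (edgesOn H' {v}ᶜ).ncard + 6 ≤ 3 * n := by
    rw [← ncard_edgeSet_induce]
    exact ih (fun h' => hK5 (h.trans h')) (by omega) hcompl
  have hdelete := bound H (hasGraphMinor_induce H _)
  have hedges := ncard_edgeSet_eq_compl_singleton_add H v
  refine hK5 (hasK5Minor_of_commonNeighbors (v := v) ?_ hv fun u hu => ?_)
  · exact (Set.ncard_pos).1 (by omega)
  · have hcontract := bound _ (hasGraphMinor_induce_sup_starOn (K := {v}) (S := H.neighborSet v)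
      (w := u) disjoint_compl_left (induce_singleton_connected H v) ⟨v, rfl, hu.symm⟩
      fun y hy => ⟨v, rfl, H.adj_symm hy⟩)
    have hstar := ncard_edgesOn_add_missing_le (G := H) (A := {v}ᶜ) (S := H.neighborSet v)
      (w := u) hu.ne' fun y hy => (H.ne_of_adj hy).symm
    have hcommon := ncard_neighborSet_eq_commonNeighbors hu
    omega

lemma ncard_edgesOn_add_six_le [Finite V] {A : Set V} (hG : ¬ HasK5Minor (G.induce A))
    (hA : 3 ≤ A.ncard) : (edgesOn G A).ncard + 6 ≤ 3 * A.ncard := by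
  rw [← ncard_edgeSet_induce, ← Nat.card_coe_set_eq]
  exact ncard_edgeSet_add_six_le hG hA

end Mader

/-! ### Triangulations without separating triangles -/

/-- `K` is a full component of `G - S`: a component in which every vertex of `S` has a neighbour.
If `S` is a minimal separator, then all components of `G - S` are full. -/
structure IsFullComponent {V : Type*} (G : SimpleGraph V) (S K : Set V) : Prop where
  connected : (G.induce K).Connected
  disjoint : Disjoint S K
  closed : ∀ x ∈ K, ∀ y ∉ S, G.Adj x y → y ∈ K
  attached : ∀ s ∈ S, ∃ k ∈ K, G.Adj s k

section FullComponents

variable {V : Type*} {G : SimpleGraph V} {A S K L : Set V}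

lemma IsFullComponent.nonempty (h : IsFullComponent G S K) : K.Nonempty :=
  (induce_connected_iff.1 h.connected).1

lemma IsFullComponent.isSeparation (h : IsFullComponent G S K) : IsSeparation G Kᶜ (S ∪ K) := by
  rintro u hu v (hv | hv) huv
  · exact .inr (Set.disjoint_left.1 h.disjoint hv)
  · exact .inl (.inl (by_contra fun huS => hu (h.closed v hv u huS huv.symm)))

lemma hasSepTriangle_of_isFullComponent (hK : IsFullComponent G S K)
    (hL : IsFullComponent G S L) (hKL : Disjoint K L) (h3 : S.ncard = 3) (hS : G.IsClique S) :
    HasSepTriangle G := by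
  obtain ⟨u, v, w, huv, huw, hvw, rfl⟩ := Set.ncard_eq_three.1 h3
  refine ⟨u, v, w, hS (by simp) (by simp) huv, hS (by simp) (by simp) hvw,
    hS (by simp) (by simp) huw, fun hconn => ?_⟩
  have hcompl : {x | x ≠ u ∧ x ≠ v ∧ x ≠ w} = ({u, v, w} : Set V)ᶜ := by
    ext x
    simp
  rw [hcompl] at hconn
  have hLK := (induce_connected_iff.1 hconn).2 K
    (Set.subset_compl_iff_disjoint_left.2 hK.disjoint) hK.nonempty hK.closed
  obtain ⟨x, hx⟩ := hL.nonempty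
  exact Set.disjoint_left.1 hKL (hLK (Set.disjoint_right.1 hL.disjoint hx)) hx

variable [Finite V]

lemma exists_component {s : Set V} (hK : K.Nonempty)
    (hclosed : ∀ x ∈ K, ∀ y ∈ s, G.Adj x y → y ∈ K) :
    ∃ L ⊆ K, (∀ x ∈ L, ∀ y ∈ s, G.Adj x y → y ∈ L) ∧ (G.induce L).Connected := by
  obtain ⟨L, ⟨hLK, hLn, hL⟩, hmin⟩ := exists_minimal_of_wellFoundedLT
    (fun L : Set V => L ⊆ K ∧ L.Nonempty ∧ ∀ x ∈ L, ∀ y ∈ s, G.Adj x y → y ∈ L)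
    ⟨K, subset_rfl, hK, hclosed⟩
  refine ⟨L, hLK, hL, induce_connected_iff.2 ⟨hLn, fun M hML hMn hM => ?_⟩⟩
  exact hmin ⟨hML.trans hLK, hMn, fun x hx y hy hxy => hM x hx y (hL x (hML hx) y hy hxy) hxy⟩ hML

lemma exists_isFullComponent (hmin : ∀ s ∈ S, (G.induce (S \ {s})ᶜ).Connected)
    (hK : K.Nonempty) (hKS : K ⊆ Sᶜ) (hclosed : ∀ x ∈ K, ∀ y ∈ Sᶜ, G.Adj x y → y ∈ K) :
    ∃ L ⊆ K, IsFullComponent G S L := by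
  obtain ⟨L, hLK, hL, hconn⟩ := exists_component hK hclosed
  have hLS := hLK.trans hKS
  refine ⟨L, hLK, hconn, Set.subset_compl_iff_disjoint_left.1 hLS, hL, fun s hs => ?_⟩
  by_contra! hno
  have hsub := (induce_connected_iff.1 (hmin s hs)).2 L
    (hLS.trans (Set.compl_subset_compl.2 Set.sdiff_subset))
    (induce_connected_iff.1 hconn).1 fun x hx y hy hxy => by
      obtain rfl | hys := eq_or_ne y s
      · exact absurd hxy.symm (hno x hx)
      · exact hL x hx y (fun hyS => hy ⟨hyS, hys⟩) hxy
  exact hLS (hsub fun h => h.2 rfl) hs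

lemma exists_isFullComponent_pair {s : Set V} (hs : sᶜ.Nonempty)
    (h : ¬ (G.induce sᶜ).Connected) :
    ∃ S ⊆ s, ∃ K L, IsFullComponent G S K ∧ IsFullComponent G S L ∧ Disjoint K L := by
  obtain ⟨S, hSs, ⟨hS, hmin⟩⟩ := exists_minimal_le_of_wellFoundedLT
    (fun S : Set V => ¬ (G.induce Sᶜ).Connected) s h
  have hmin' : ∀ x ∈ S, (G.induce (S \ {x})ᶜ).Connected := fun x hx => by
    by_contra hcon
    exact (hmin hcon Set.sdiff_subset hx).2 rfl
  rw [induce_connected_iff] at hS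
  push Not at hS
  obtain ⟨K, hKS, hK, hclosed, hsub⟩ := hS (hs.mono (Set.compl_subset_compl.2 hSs))
  obtain ⟨K', hK'K, hK'⟩ := exists_isFullComponent hmin' hK hKS hclosed
  obtain ⟨L', hL'L, hL'⟩ := exists_isFullComponent (K := Sᶜ \ K) hmin'
    (Set.sdiff_nonempty.2 hsub) Set.sdiff_subset
    fun x hx y hy hxy => ⟨hy, fun hyK => hx.2 (hclosed y hyK x hx.1 hxy.symm)⟩
  exact ⟨S, hSs, K', L', hK', hL',
    Set.disjoint_sdiff_right.mono hK'K hL'L⟩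

lemma ncard_edgesOn_add_missing_add_six_le (hG : ¬ HasK5Minor G) (hK : IsFullComponent G S K)
    (hSA : S ⊆ A) (hAK : Disjoint A K) (hA : 3 ≤ A.ncard) {w : V} (hw : w ∈ S) :
    (edgesOn G A).ncard + (S \ insert w (G.neighborSet w)).ncard + 6 ≤ 3 * A.ncard := by
  have hminor := hasGraphMinor_induce_sup_starOn hAK hK.connected (hK.attached w hw) hK.attached
  exact (Nat.add_le_add_right (ncard_edgesOn_add_missing_le (hSA hw) hSA) 6).trans
    (ncard_edgesOn_add_six_le (fun h => hG (hminor.trans h)) hA)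

lemma ncard_edgesOn_add_five_le (hG : ¬ HasK5Minor G) (hA : 2 ≤ A.ncard) :
    (edgesOn G A).ncard + 5 ≤ 3 * A.ncard := by
  obtain h2 | h3 := hA.eq_or_lt
  · have hchoose := ncard_edgesOn_le_choose_two (G := G) (A := A)
    rw [← h2, Nat.choose_self] at hchoose
    omega
  · have := ncard_edgesOn_add_six_le (fun h => hG ((hasGraphMinor_induce G A).trans h)) h3
    omega

lemma ncard_edgesOn_add_three_le (hG : ¬ HasK5Minor G) (hA : A.Nonempty) :
    (edgesOn G A).ncard + 3 ≤ 3 * A.ncard := by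
  obtain h1 | h2 := Nat.eq_or_lt_of_le ((Set.ncard_pos).2 hA)
  · have hchoose := ncard_edgesOn_le_choose_two (G := G) (A := A)
    rw [← h1, Nat.choose_succ_self] at hchoose
    omega
  · have := ncard_edgesOn_add_five_le hG h2
    omega

lemma IsFullComponent.ncard_edgeSet_add (hK : IsFullComponent G S K) :
    G.edgeSet.ncard + (edgesOn G S).ncard = (edgesOn G Kᶜ).ncard + (edgesOn G (S ∪ K)).ncard := by
  have hunion : Kᶜ ∪ (S ∪ K) = Set.univ := by
    rw [Set.union_left_comm, Set.compl_union_self, Set.union_univ]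
  have hinter : Kᶜ ∩ (S ∪ K) = S := by
    rw [Set.inter_union_distrib_left, Set.compl_inter_self, Set.union_empty,
      Set.inter_eq_right.2 (Set.subset_compl_iff_disjoint_right.2 hK.disjoint)]
  have hadd := hK.isSeparation.ncard_edgesOn_union
  rwa [hunion, hinter, edgesOn_univ] at hadd

lemma IsFullComponent.card_add (hK : IsFullComponent G S K) :
    Nat.card V + S.ncard = Kᶜ.ncard + (S ∪ K).ncard := by
  rw [Set.ncard_union_eq hK.disjoint, ← Set.ncard_add_ncard_compl K]
  omega

lemma IsFullComponent.ncard_lt_ncard_union (hK : IsFullComponent G S K) :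
    S.ncard < (S ∪ K).ncard := by
  rw [Set.ncard_union_eq hK.disjoint]
  exact Nat.lt_add_of_pos_right ((Set.ncard_pos).2 hK.nonempty)

lemma IsFullComponent.ncard_lt_ncard_compl (hK : IsFullComponent G S K)
    (hL : IsFullComponent G S L) (hKL : Disjoint K L) : S.ncard < Kᶜ.ncard :=
  hL.ncard_lt_ncard_union.trans_le <| Set.ncard_le_ncard <|
    Set.subset_compl_iff_disjoint_right.2 (hK.disjoint.union_left hKL.symm)

/-- Both sides of the separation gain the edges missing at `w` when the full component on the
other side is contracted into `w`. -/
lemma ncard_edgesOn_add_two_mul_missing_le (hG : ¬ HasK5Minor G)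
    (hE : G.edgeSet.ncard + 6 = 3 * Nat.card V) (hK : IsFullComponent G S K)
    (hL : IsFullComponent G S L) (hKL : Disjoint K L) (hS : 2 ≤ S.ncard) {w : V} (hw : w ∈ S) :
    (edgesOn G S).ncard + 2 * (S \ insert w (G.neighborSet w)).ncard + 6 ≤ 3 * S.ncard := by
  have hleft := ncard_edgesOn_add_missing_add_six_le hG hK
    (Set.subset_compl_iff_disjoint_right.2 hK.disjoint) disjoint_compl_left
    (hS.trans_lt (hK.ncard_lt_ncard_compl hL hKL)) hw
  have hright := ncard_edgesOn_add_missing_add_six_le hG hL Set.subset_union_left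
    (hL.disjoint.union_left hKL) (hS.trans_lt hK.ncard_lt_ncard_union) hw
  have hedges := hK.ncard_edgeSet_add
  have hcard := hK.card_add
  omega

lemma IsFullComponent.two_le_ncard (hG : ¬ HasK5Minor G)
    (hE : G.edgeSet.ncard + 6 = 3 * Nat.card V) (hV : 3 ≤ Nat.card V)
    (hK : IsFullComponent G S K) (hL : IsFullComponent G S L) (hKL : Disjoint K L) :
    2 ≤ S.ncard := by
  by_contra! hS
  have hedges := hK.ncard_edgeSet_add
  have hcard := hK.card_add
  have hleft := hK.ncard_lt_ncard_compl hL hKL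
  have hright := hK.ncard_lt_ncard_union
  have bound {A : Set V} (hA : 0 < A.ncard) := ncard_edgesOn_add_three_le hG ((Set.ncard_pos).1 hA)
  have := bound (A := Kᶜ) (by omega)
  have := bound (A := S ∪ K) (by omega)
  have := ncard_edgesOn_add_five_le hG (A := Kᶜ)
  have := ncard_edgesOn_add_five_le hG (A := S ∪ K)
  omega

lemma exists_lt_of_ncard_eq_two (h : S.ncard = 2) : ∃ w ∈ S,
    0 < (edgesOn G S).ncard + 2 * (S \ insert w (G.neighborSet w)).ncard := by
  obtain ⟨u, w, huw, rfl⟩ := Set.ncard_eq_two.1 h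
  refine ⟨w, by simp, ?_⟩
  by_cases hadj : G.Adj u w
  · have : 0 < (edgesOn G {u, w}).ncard :=
      (Set.ncard_pos).2 ⟨s(u, w), mk_mem_edgesOn.2 ⟨hadj, by simp, by simp⟩⟩
    omega
  · have : 0 < ({u, w} \ insert w (G.neighborSet w)).ncard :=
      (Set.ncard_pos).2 ⟨u, by simp, by simp [huw, G.adj_comm w u, hadj]⟩
    omega

lemma exists_lt_of_ncard_eq_three (h : S.ncard = 3) (hS : ¬ G.IsClique S) : ∃ w ∈ S,
    3 < (edgesOn G S).ncard + 2 * (S \ insert w (G.neighborSet w)).ncard := by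
  obtain ⟨u, hu, w, hw, huw, hna⟩ : ∃ u ∈ S, ∃ w ∈ S, u ≠ w ∧ ¬ G.Adj u w := by
    simpa [isClique_iff, Set.Pairwise] using hS
  have hna' : ¬ G.Adj w u := fun h => hna h.symm
  obtain ⟨v, hv, hvuw⟩ : ∃ v ∈ S, v ∉ ({u, w} : Set V) :=
    Set.exists_mem_notMem_of_ncard_lt_ncard (by rw [Set.ncard_pair huw, h]; decide)
  have hvu : v ≠ u := by grind
  have hvw : v ≠ w := by grind
  by_cases hvu' : G.Adj u v
  · by_cases hvw' : G.Adj w v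
    · have hedges : 1 < (edgesOn G S).ncard := (Set.one_lt_ncard).2
        ⟨s(u, v), mk_mem_edgesOn.2 ⟨hvu', hu, hv⟩, s(w, v), mk_mem_edgesOn.2 ⟨hvw', hw, hv⟩,
          fun h => huw (Sym2.congr_left.1 h)⟩
      have hmissing : 0 < (S \ insert w (G.neighborSet w)).ncard :=
        (Set.ncard_pos).2 ⟨u, hu, by simp [huw, hna']⟩
      exact ⟨w, hw, by omega⟩
    · have hmissing : 1 < (S \ insert w (G.neighborSet w)).ncard := (Set.one_lt_ncard).2
        ⟨u, ⟨hu, by simp [huw, hna']⟩, v, ⟨hv, by simp [hvw, hvw']⟩, hvu.symm⟩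
      exact ⟨w, hw, by omega⟩
  · have hmissing : 1 < (S \ insert u (G.neighborSet u)).ncard := (Set.one_lt_ncard).2
      ⟨w, ⟨hw, by simp [huw.symm, hna]⟩, v, ⟨hv, by simp [hvu, hvu']⟩, hvw.symm⟩
    exact ⟨u, hu, by omega⟩

end FullComponents

theorem isKConnected_four {V : Type*} [Fintype V] {G : SimpleGraph V} (hG : ¬ HasK5Minor G)
    (hV : 5 ≤ Fintype.card V) (hE : G.edgeSet.ncard + 6 = 3 * Fintype.card V)
    (hsep : ¬ HasSepTriangle G) : IsKConnected 4 G := by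
  refine ⟨hV, fun s hs => by_contra fun hconn => ?_⟩
  rw [← Nat.card_eq_fintype_card] at hV hE
  have hcompl : sᶜ.Nonempty := by
    rw [← Set.ncard_pos, Set.ncard_compl]
    omega
  obtain ⟨S, hSs, K, L, hK, hL, hKL⟩ := exists_isFullComponent_pair hcompl hconn
  have h2 := hK.two_le_ncard hG hE (by omega) hL hKL
  have h3 : S.ncard ≤ 3 := (Set.ncard_le_ncard hSs).trans (Nat.le_of_lt_succ hs)
  have hupper {w : V} (hw : w ∈ S) := ncard_edgesOn_add_two_mul_missing_le hG hE hK hL hKL h2 hw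
  obtain htwo | hthree : S.ncard = 2 ∨ S.ncard = 3 := by omega
  · obtain ⟨w, hw, hlower⟩ := exists_lt_of_ncard_eq_two (G := G) htwo
    have := hupper hw
    omega
  · obtain ⟨w, hw, hlower⟩ := exists_lt_of_ncard_eq_three hthree fun hS =>
      hsep (hasSepTriangle_of_isFullComponent hK hL hKL hthree hS)
    have := hupper hw
    omega

/-! ### Cycle covers -/

section CycleCover

variable {V : Type*} {G : SimpleGraph V}

/-- A cycle cover with prescribed multiplicities: a multiset `S` of cycles of `G` such that every
edge `e` lies in exactly `m e` of them. A cycle double cover is the case where `m` is `2` on the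
edges of `G` and `0` elsewhere. -/
def IsCycleCover (S : Multiset G.Subgraph) (m : Sym2 V → ℕ) : Prop :=
  (∀ C ∈ S, IsCycleSubgraph C) ∧ ∀ e, S.countP (fun C => e ∈ C.edgeSet) = m e

variable {S S' : Multiset G.Subgraph} {m m' : Sym2 V → ℕ}

lemma IsCycleCover.zero : IsCycleCover (0 : Multiset G.Subgraph) 0 :=
  ⟨by simp, by simp⟩

lemma IsCycleCover.add (h : IsCycleCover S m) (h' : IsCycleCover S' m') :
    IsCycleCover (S + S') (m + m') :=
  ⟨fun C hC => (Multiset.mem_add.1 hC).elim (h.1 C) (h'.1 C),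
    fun e => by rw [Multiset.countP_add, h.2, h'.2, Pi.add_apply]⟩

lemma IsCycleCover.singleton {C : G.Subgraph} (hC : IsCycleSubgraph C) :
    IsCycleCover {C} (C.edgeSet.indicator 1) := by
  refine ⟨by simpa using hC, fun e => ?_⟩
  rw [← Multiset.cons_zero, Multiset.countP_cons, Multiset.countP_zero, zero_add,
    Set.indicator_apply, Pi.one_apply]

end CycleCover

/-! ### Exchanging two cycles along a common edge -/

section CycleExchange

variable {V : Type*} {G : SimpleGraph V} {C D : G.Subgraph} {u v x y z : V}

lemma isCycleSubgraph_toSubgraph {p : G.Walk u u} (hp : p.IsCycle) :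
    IsCycleSubgraph p.toSubgraph :=
  ⟨p.toSubgraph_connected.coe,
    fun _ hv => hp.ncard_neighborSet_toSubgraph_eq_two (p.mem_verts_toSubgraph.1 hv)⟩

lemma IsCycleSubgraph.eq_of_le (hC : IsCycleSubgraph C) (hD : IsCycleSubgraph D) (h : C ≤ D) :
    C = D := by
  have hadj : ∀ a ∈ C.verts, ∀ b, D.Adj a b → C.Adj a b := fun a ha b hab => by
    have hN : C.neighborSet a = D.neighborSet a :=
      Set.eq_of_subset_of_ncard_le (fun _ hw => h.2 hw)
        (by rw [hC.2 a ha, hD.2 a (h.1 ha)])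
        (Set.finite_of_ncard_pos (by rw [hD.2 a (h.1 ha)]; exact two_pos))
    exact hN.symm.subset hab
  obtain ⟨⟨a, ha⟩⟩ := hC.1.nonempty
  have hverts : D.verts ⊆ C.verts := fun b hb => by_contra fun hbC => by
    obtain ⟨p⟩ := hD.1.preconnected ⟨a, h.1 ha⟩ ⟨b, hb⟩
    obtain ⟨d, -, hfst, hsnd⟩ := p.exists_boundary_dart {w | (w : V) ∈ C.verts} ha hbC
    exact hsnd (C.edge_vert (hadj d.fst hfst d.snd d.adj).symm)
  exact h.antisymm ⟨hverts, fun a b hab => hadj a (hverts (D.edge_vert hab)) b hab⟩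

lemma IsCycleSubgraph.exists_isCycle_toSubgraph_eq [Finite V] (hC : IsCycleSubgraph C)
    (h : C.Adj x y) :
    ∃ p : G.Walk y x, (Walk.cons h.adj_sub p).IsCycle ∧
      (Walk.cons h.adj_sub p).toSubgraph = C := by
  have hcycles : C.spanningCoe.IsCycles := fun v ⟨_, hw⟩ => hC.2 v (C.edge_vert hw)
  obtain ⟨q, hq⟩ := (hcycles.reachable_deleteEdges (v := y) (w := x) h.symm).exists_isPath
  have hqC : q.edgeSet ⊆ C.edgeSet \ {s(x, y)} := fun e he => by
    rw [← C.edgeSet_spanningCoe, Sym2.eq_swap, ← edgeSet_deleteEdges]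
    exact q.edges_subset_edgeSet he
  have hle : C.spanningCoe.deleteEdges {s(y, x)} ≤ G :=
    (deleteEdges_le _).trans C.spanningCoe_le
  have hcycle : (Walk.cons h.adj_sub (q.mapLe hle)).IsCycle := by
    refine (Walk.cons_isCycle_iff _ _).2 ⟨hq.mapLe hle, fun he => ?_⟩
    rw [Walk.edges_mapLe_eq_edges] at he
    exact (hqC he).2 rfl
  refine ⟨_, hcycle, (isCycleSubgraph_toSubgraph hcycle).eq_of_le hC ?_⟩
  rw [Walk.toSubgraph_le_iff Walk.not_nil_cons, Walk.edgeSet_cons, Walk.edgeSet_mapLe_eq_edgeSet]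
  exact Set.insert_subset h fun e he => (hqC he).1

lemma disjoint_edgeSet_of_subsingleton {u' v' : V} {p : G.Walk u v} {q : G.Walk u' v'}
    (h : (p.toSubgraph.verts ∩ q.toSubgraph.verts).Subsingleton) :
    Disjoint p.edgeSet q.edgeSet := by
  rw [← Walk.edgeSet_toSubgraph, ← Walk.edgeSet_toSubgraph]
  refine Set.disjoint_left.2 fun e hp hq => ?_
  induction e with
  | _ a b =>
    have hab : a = b := h ⟨p.toSubgraph.edge_vert hp, q.toSubgraph.edge_vert hq⟩
      ⟨p.toSubgraph.edge_vert hp.symm, q.toSubgraph.edge_vert hq.symm⟩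
    exact hp.adj_sub.ne hab

lemma inter_verts_toSubgraph_of_isPath_append {p : G.Walk u z} {q : G.Walk z v}
    (h : (p.append q).IsPath) : p.toSubgraph.verts ∩ q.toSubgraph.verts ⊆ {z} := by
  rintro w ⟨hp, hq⟩
  rw [Walk.mem_verts_toSubgraph] at hp hq
  have hnodup := h.support_nodup
  rw [Walk.support_append] at hnodup
  rw [← Walk.cons_tail_support, List.mem_cons] at hq
  exact hq.resolve_right (List.disjoint_of_nodup_append hnodup hp)

lemma notMem_verts_toSubgraph_of_isPath_append {p : G.Walk u z} {q : G.Walk z v}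
    (h : (p.append q).IsPath) (hzu : z ≠ u) (hzv : z ≠ v) :
    u ∉ q.toSubgraph.verts ∧ v ∉ p.toSubgraph.verts :=
  ⟨fun hu => hzu (inter_verts_toSubgraph_of_isPath_append h
      ⟨p.start_mem_verts_toSubgraph, hu⟩).symm,
    fun hv => hzv (inter_verts_toSubgraph_of_isPath_append h
      ⟨hv, q.end_mem_verts_toSubgraph⟩).symm⟩

lemma edgeSet_eq_singleton_of_length_le_one {p : G.Walk u v} (huv : u ≠ v) (hp : p.length ≤ 1) :
    p.edgeSet = {s(u, v)} := by
  cases p with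
  | nil => exact absurd rfl huv
  | cons h q =>
    cases q with
    | nil => simp
    | cons h' q => simp at hp

/-- Two internally disjoint paths form a cycle, unless both are the edge `uv` and cancel. -/
lemma exists_isCycleCover_symmDiff_of_subset_pair {p q : G.Walk u v} (hp : p.IsPath)
    (hq : q.IsPath) (huv : u ≠ v)
    (hpq : p.toSubgraph.verts ∩ q.toSubgraph.verts ⊆ {u, v}) :
    ∃ R : Multiset G.Subgraph, Multiset.card R ≤ 1 ∧
      IsCycleCover R ((symmDiff p.edgeSet q.edgeSet).indicator 1) := by
  by_cases hlen : 1 < p.length ∨ 1 < q.length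
  · have hdisj : p.support.tail.Disjoint q.reverse.support.tail := fun w hwp hwq => by
      have hw : w ∈ p.toSubgraph.verts ∩ q.toSubgraph.verts :=
        ⟨p.mem_verts_toSubgraph.2 (List.mem_of_mem_tail hwp),
          q.mem_verts_toSubgraph.2 (by simpa using List.mem_of_mem_tail hwq)⟩
      rcases hpq hw with rfl | rfl
      · exact (List.nodup_cons.1 (p.cons_tail_support ▸ hp.support_nodup)).1 hwp
      · exact (List.nodup_cons.1
          (q.reverse.cons_tail_support ▸ hq.reverse.support_nodup)).1 hwq
    have hcycle : (p.append q.reverse).IsCycle :=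
      hp.isCycle_append hq.reverse hdisj (by simpa using hlen)
    have hedges : Disjoint p.edgeSet q.edgeSet := Set.disjoint_left.2 fun e he he' => by
      have hnodup := hcycle.edges_nodup
      rw [Walk.edges_append, Walk.edges_reverse] at hnodup
      exact List.disjoint_of_nodup_append hnodup he (List.mem_reverse.2 he')
    have hunion : symmDiff p.edgeSet q.edgeSet = (p.append q.reverse).toSubgraph.edgeSet := by
      rw [Walk.edgeSet_toSubgraph, Walk.edgeSet_append, Walk.edgeSet_reverse]
      exact hedges.symmDiff_eq_sup
    refine ⟨{(p.append q.reverse).toSubgraph}, by simp, ?_⟩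
    rw [hunion]
    exact .singleton (isCycleSubgraph_toSubgraph hcycle)
  · push Not at hlen
    refine ⟨0, by simp, ?_⟩
    rw [edgeSet_eq_singleton_of_length_le_one huv hlen.1,
      edgeSet_eq_singleton_of_length_le_one huv hlen.2, symmDiff_self, Set.bot_eq_empty,
      Set.indicator_empty]
    exact .zero

lemma exists_isCycleCover_symmDiff_append {p₁ q₁ : G.Walk u z} {p₂ q₂ : G.Walk z v}
    (hp : (p₁.append p₂).IsPath) (hq : (q₁.append q₂).IsPath) (huz : u ≠ z) (hzv : z ≠ v)
    (h₁ : p₁.toSubgraph.verts ∩ q₁.toSubgraph.verts ⊆ {u, z})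
    (h₂ : p₂.toSubgraph.verts ∩ q₂.toSubgraph.verts ⊆ {z, v})
    (h₁₂ : p₁.toSubgraph.verts ∩ q₂.toSubgraph.verts ⊆ {z})
    (h₂₁ : q₁.toSubgraph.verts ∩ p₂.toSubgraph.verts ⊆ {z}) :
    ∃ R : Multiset G.Subgraph, Multiset.card R ≤ 2 ∧
      IsCycleCover R
        ((symmDiff (p₁.append p₂).edgeSet (q₁.append q₂).edgeSet).indicator 1) := by
  obtain ⟨R₁, hcard₁, hR₁⟩ := exists_isCycleCover_symmDiff_of_subset_pair
    hp.of_append_left hq.of_append_left huz h₁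
  obtain ⟨R₂, hcard₂, hR₂⟩ := exists_isCycleCover_symmDiff_of_subset_pair
    hp.of_append_right hq.of_append_right hzv h₂
  refine ⟨R₁ + R₂, (Multiset.card_add R₁ R₂).trans_le (add_le_add hcard₁ hcard₂), ?_⟩
  have edges_disjoint {r₁ : G.Walk u z} {r₂ : G.Walk z v}
      (h : r₁.toSubgraph.verts ∩ r₂.toSubgraph.verts ⊆ {z}) : Disjoint r₁.edgeSet r₂.edgeSet :=
    disjoint_edgeSet_of_subsingleton (Set.subsingleton_singleton.anti h)
  have hdisj : Disjoint (p₁.edgeSet ∪ q₁.edgeSet) (p₂.edgeSet ∪ q₂.edgeSet) := by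
    simp only [Set.disjoint_union_left, Set.disjoint_union_right]
    exact ⟨⟨edges_disjoint (inter_verts_toSubgraph_of_isPath_append hp), edges_disjoint h₂₁⟩,
      edges_disjoint h₁₂, edges_disjoint (inter_verts_toSubgraph_of_isPath_append hq)⟩
  have hsymm : symmDiff (p₁.edgeSet ∪ p₂.edgeSet) (q₁.edgeSet ∪ q₂.edgeSet) =
      symmDiff p₁.edgeSet q₁.edgeSet ∪ symmDiff p₂.edgeSet q₂.edgeSet := by
    ext e
    have := @Set.disjoint_left.1 hdisj e
    simp only [Set.mem_symmDiff, Set.mem_union] at this ⊢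
    tauto
  rw [Walk.edgeSet_append, Walk.edgeSet_append, hsymm,
    Set.indicator_union_of_disjoint (hdisj.mono symmDiff_le_sup symmDiff_le_sup)]
  exact hR₁.add hR₂

/-- If there is a third common vertex `z`, it cuts the two paths into two pairs of internally
disjoint paths. -/
lemma exists_isCycleCover_symmDiff_of_ncard_le_three {p q : G.Walk u v} (hp : p.IsPath)
    (hq : q.IsPath) (huv : u ≠ v)
    (hpq : (p.toSubgraph.verts ∩ q.toSubgraph.verts).ncard ≤ 3) :
    ∃ R : Multiset G.Subgraph, Multiset.card R ≤ 2 ∧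
      IsCycleCover R ((symmDiff p.edgeSet q.edgeSet).indicator 1) := by
  by_cases hpair : p.toSubgraph.verts ∩ q.toSubgraph.verts ⊆ {u, v}
  · obtain ⟨R, hcard, hR⟩ := exists_isCycleCover_symmDiff_of_subset_pair hp hq huv hpair
    exact ⟨R, hcard.trans one_le_two, hR⟩
  obtain ⟨z, ⟨hzp, hzq⟩, hz⟩ := Set.not_subset.1 hpair
  obtain ⟨hzu, hzv⟩ : z ≠ u ∧ z ≠ v := by simpa using hz
  have hcommon : {u, v, z} = p.toSubgraph.verts ∩ q.toSubgraph.verts := by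
    refine Set.eq_of_subset_of_ncard_le ?_ ?_
      (by simpa using p.support.finite_toSet.inter_of_left _)
    · rintro w (rfl | rfl | rfl)
      exacts [⟨p.start_mem_verts_toSubgraph, q.start_mem_verts_toSubgraph⟩,
        ⟨p.end_mem_verts_toSubgraph, q.end_mem_verts_toSubgraph⟩, ⟨hzp, hzq⟩]
    · rwa [Set.ncard_eq_three.2 ⟨u, v, z, huv, hzu.symm, hzv.symm, rfl⟩]
  obtain ⟨p₁, p₂, rfl⟩ := Walk.mem_support_iff_exists_append.1 (p.mem_verts_toSubgraph.1 hzp)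
  obtain ⟨q₁, q₂, rfl⟩ := Walk.mem_support_iff_exists_append.1 (q.mem_verts_toSubgraph.1 hzq)
  simp only [Walk.toSubgraph_append, Subgraph.verts_sup] at hcommon
  have hcommon' (w) (hwp : w ∈ p₁.toSubgraph.verts ∨ w ∈ p₂.toSubgraph.verts)
      (hwq : w ∈ q₁.toSubgraph.verts ∨ w ∈ q₂.toSubgraph.verts) : w = u ∨ w = v ∨ w = z :=
    hcommon.superset ⟨hwp, hwq⟩
  obtain ⟨hup, hvp⟩ := notMem_verts_toSubgraph_of_isPath_append hp hzu hzv
  obtain ⟨huq, hvq⟩ := notMem_verts_toSubgraph_of_isPath_append hq hzu hzv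
  clear hpq hpair hcommon
  refine exists_isCycleCover_symmDiff_append hp hq hzu.symm hzv ?_ ?_ ?_ ?_ <;>
  · rintro w ⟨hw, hw'⟩
    grind

lemma IsCycleSubgraph.exists_isCycleCover_symmDiff [Finite V] (hC : IsCycleSubgraph C)
    (hD : IsCycleSubgraph D) (hne : (C.edgeSet ∩ D.edgeSet).Nonempty)
    (hCD : (C.verts ∩ D.verts).ncard ≤ 3) :
    ∃ R : Multiset G.Subgraph, Multiset.card R ≤ 2 ∧
      IsCycleCover R ((symmDiff C.edgeSet D.edgeSet).indicator 1) := by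
  obtain ⟨e, heC, heD⟩ := hne
  induction e with
  | _ x y =>
  obtain ⟨p, hp, hpC⟩ := hC.exists_isCycle_toSubgraph_eq heC
  obtain ⟨q, hq, hqD⟩ := hD.exists_isCycle_toSubgraph_eq heD
  rw [Walk.cons_isCycle_iff] at hp hq
  have hsymm : symmDiff (insert s(x, y) p.edgeSet) (insert s(x, y) q.edgeSet) =
      symmDiff p.edgeSet q.edgeSet := by
    ext e
    have hep : e = s(x, y) → e ∉ p.edgeSet := by rintro rfl; exact hp.2
    have heq : e = s(x, y) → e ∉ q.edgeSet := by rintro rfl; exact hq.2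
    simp only [Set.mem_symmDiff, Set.mem_insert_iff]
    tauto
  rw [← hpC, ← hqD, Walk.edgeSet_toSubgraph, Walk.edgeSet_toSubgraph, Walk.edgeSet_cons,
    Walk.edgeSet_cons, hsymm]
  have hverts : p.toSubgraph.verts ∩ q.toSubgraph.verts ⊆ C.verts ∩ D.verts := by
    rw [← hpC, ← hqD, Walk.toSubgraph, Walk.toSubgraph]
    exact Set.inter_subset_inter Set.subset_union_right Set.subset_union_right
  exact exists_isCycleCover_symmDiff_of_ncard_le_three hp.1 hq.1 heC.symm.ne
    ((Set.ncard_le_ncard hverts).trans hCD)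

end CycleExchange

/-! ### Matching traces -/

section TraceMatching

variable {ι α β : Type*} {a : α → Set ι} {b : β → Set ι}

/-- The traces of two families of cycles on the edges `ι` of a common triangle are the families
`a` and `b`. A trace matching assigns to every edge `e` a matched pair `(f e, g e)` in such a way
that `e` lies in both members of its own pair and of no other pair. -/
def IsTraceMatching (a : α → Set ι) (b : β → Set ι) (f : ι → α) (g : ι → β) : Prop :=
  ∀ e e', (f e' = f e ↔ e' ∈ a (f e) ∩ b (g e)) ∧ (g e' = g e ↔ e' ∈ a (f e) ∩ b (g e))

lemma IsTraceMatching.symm {f : ι → α} {g : ι → β} (h : IsTraceMatching a b f g) :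
    IsTraceMatching b a g f := fun e e' => by
  rw [Set.inter_comm]
  exact (h e e').symm

lemma eq_or_eq_or_eq_of_card_eq_three [Fintype ι] (h3 : Fintype.card ι = 3) {i j k : ι}
    (hij : i ≠ j) (hik : i ≠ k) (hjk : j ≠ k) (l : ι) : l = i ∨ l = j ∨ l = k := by
  have huniv : ({i, j, k} : Finset ι) = Finset.univ :=
    Finset.eq_univ_of_card _ ((Finset.card_eq_three.2 ⟨i, j, k, hij, hik, hjk, rfl⟩).trans h3.symm)
  simpa using huniv.superset (Finset.mem_univ l)

variable [Fintype α] [Fintype β]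

lemma exists_mem_and_ne_univ {k : ι} (ha : Finset.card {x | k ∈ a x} = 2)
    (huniv : {x | a x = Set.univ}.Subsingleton) : ∃ x, k ∈ a x ∧ a x ≠ Set.univ := by
  obtain ⟨x, hx, y, hy, hxy⟩ := Finset.one_lt_card.1 (ha.symm ▸ one_lt_two)
  rw [Finset.mem_filter_univ] at hx hy
  by_contra! h
  exact hxy (huniv (h x hx) (h y hy))

variable [Fintype ι]

lemma exists_injective_mem_of_card_eq_two (h3 : Fintype.card ι = 3)
    (ha : ∀ e, Finset.card {x | e ∈ a x} = 2) (huniv : {x | a x = Set.univ}.Subsingleton) :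
    ∃ f : ι → α, f.Injective ∧ ∀ e, e ∈ a (f e) := by
  have hall (s : Finset ι) : s.card ≤ (s.biUnion fun e => ({x | e ∈ a x} : Finset α)).card := by
    rcases s.eq_empty_or_nonempty with rfl | ⟨e, he⟩
    · exact Nat.zero_le _
    by_contra! hlt
    have hsub (e') (he' : e' ∈ s) := Finset.subset_biUnion_of_mem
      (fun e => ({x | e ∈ a x} : Finset α)) he'
    have hle := (ha e).ge.trans (Finset.card_le_card (hsub e he))
    have hs : s = Finset.univ :=
      s.card_eq_iff_eq_univ.1 (le_antisymm s.card_le_univ (by omega))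
    obtain ⟨x, hx, hne⟩ := exists_mem_and_ne_univ (ha e) huniv
    refine hne (Set.eq_univ_of_forall fun e' => ?_)
    have he' : ({x | e' ∈ a x} : Finset α) = _ :=
      Finset.eq_of_subset_of_card_le (hsub e' (hs ▸ Finset.mem_univ e'))
        (by rw [ha]; have := s.card_le_univ; omega)
    have hx' := hsub e he ((Finset.mem_filter_univ _).2 hx)
    rw [← he'] at hx'
    simpa using hx'
  obtain ⟨f, hf, hfa⟩ := (Finset.all_card_le_biUnion_card_iff_exists_injective _).1 hall
  exact ⟨f, hf, fun e => by simpa using hfa e⟩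

lemma exists_isTraceMatching_of_inter_eq_compl_singleton (h3 : Fintype.card ι = 3)
    (ha : ∀ e, Finset.card {x | e ∈ a x} = 2) (hb : ∀ e, Finset.card {y | e ∈ b y} = 2)
    (huniv : {y | b y = Set.univ}.Subsingleton) {x : α} {y : β} {k : ι} (hxy : a x ∩ b y = {k}ᶜ)
    (hk : k ∉ a x) : ∃ f g, IsTraceMatching a b f g := by
  obtain ⟨y', hky', hy'⟩ := exists_mem_and_ne_univ (hb k) huniv
  obtain ⟨i, hi⟩ := (Set.ne_univ_iff_exists_notMem _).1 hy'
  have hik : i ≠ k := by rintro rfl; exact hi hky'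
  obtain ⟨j, hj⟩ : ∃ j, j ∉ ({i, k} : Finset ι) :=
    Finset.exists_mem_notMem_of_card_lt_card (t := Finset.univ) (by
      rw [Finset.card_pair hik, Finset.card_univ, h3]; norm_num) |>.imp fun _ h => h.2
  obtain ⟨hji, hjk⟩ : j ≠ i ∧ j ≠ k := by simpa using hj
  have mem_x {l : ι} (hl : l ≠ k) : l ∈ a x ∩ b y := hxy.superset hl
  obtain ⟨x', hkx', hjx'⟩ : ∃ x', k ∈ a x' ∧ j ∉ a x' := by
    by_contra! hsub
    have heq : ({x | k ∈ a x} : Finset α) = ({x | j ∈ a x} : Finset α) :=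
      Finset.eq_of_subset_of_card_le (Finset.monotone_filter_right _ fun x _ => hsub x)
        (by rw [ha, ha])
    have hx : x ∈ ({x | k ∈ a x} : Finset α) := by
      rw [heq, Finset.mem_filter_univ]
      exact (mem_x hjk).1
    exact hk (by simpa using hx)
  have hcases := eq_or_eq_or_eq_of_card_eq_three h3 hji.symm hik hjk
  have hyy' : y' ≠ y := by
    rintro rfl
    exact hi (mem_x hik).2
  have hxx' : x' ≠ x := by
    rintro rfl
    exact hk hkx'
  refine ⟨fun e => if e = k then x' else x, fun e => if e = k then y' else y, fun e e' => ?_⟩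
  have hx'y' : e' ∈ a x' ∩ b y' ↔ e' = k := by
    rcases hcases e' with rfl | rfl | rfl <;> grind
  have hxy' : e' ∈ a x ∩ b y ↔ e' ≠ k := by rw [hxy]; rfl
  by_cases he : e = k
  · simp only [he, if_true, hx'y']
    grind
  · simp only [he, if_false, hxy']
    grind

/-- If some pair of traces shares two edges, that pair is matched, and a second pair, sharing only
the third edge, may be needed. Otherwise Hall's theorem represents the three edges by distinct
members of each family, and these are matched edge by edge. -/
lemma exists_isTraceMatching (h3 : Fintype.card ι = 3)
    (ha : ∀ e, Finset.card {x | e ∈ a x} = 2) (hb : ∀ e, Finset.card {y | e ∈ b y} = 2)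
    (ha_univ : {x | a x = Set.univ}.Subsingleton)
    (hb_univ : {y | b y = Set.univ}.Subsingleton) : ∃ f g, IsTraceMatching a b f g := by
  by_cases hsub : ∀ x y, (a x ∩ b y).Subsingleton
  · obtain ⟨f, hf, hfa⟩ := exists_injective_mem_of_card_eq_two h3 ha ha_univ
    obtain ⟨g, hg, hgb⟩ := exists_injective_mem_of_card_eq_two h3 hb hb_univ
    refine ⟨f, g, fun e e' => ?_⟩
    have hmem : e' ∈ a (f e) ∩ b (g e) ↔ e' = e :=
      ⟨fun h => hsub _ _ h ⟨hfa e, hgb e⟩, by rintro rfl; exact ⟨hfa _, hgb _⟩⟩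
    rw [hmem, hf.eq_iff, hg.eq_iff, and_self]
  push Not at hsub
  obtain ⟨x, y, i, hi, j, hj, hij⟩ := hsub
  by_cases hxy : a x ∩ b y = Set.univ
  · exact ⟨fun _ => x, fun _ => y, fun e e' => by simp [hxy]⟩
  obtain ⟨k, hk⟩ := (Set.ne_univ_iff_exists_notMem _).1 hxy
  have hcompl : a x ∩ b y = {k}ᶜ := by
    refine (Set.subset_compl_singleton_iff.2 hk).antisymm fun l hl => ?_
    rcases eq_or_eq_or_eq_of_card_eq_three h3 hij (ne_of_mem_of_not_mem hi hk)
      (ne_of_mem_of_not_mem hj hk) l with rfl | rfl | rfl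
    exacts [hi, hj, absurd rfl hl]
  rcases not_and_or.1 hk with hka | hkb
  · exact exists_isTraceMatching_of_inter_eq_compl_singleton h3 ha hb hb_univ hcompl hka
  · obtain ⟨g, f, hgf⟩ := exists_isTraceMatching_of_inter_eq_compl_singleton h3 hb ha ha_univ
      ((Set.inter_comm _ _).trans hcompl) hkb
    exact ⟨f, g, hgf.symm⟩

end TraceMatching

section MultisetMatching

variable {ι α β γ : Type*}

lemma card_filter_toType (S : Multiset α) (p : α → Prop) :
    Finset.card {x : S | p x.1} = S.countP p := by
  conv_rhs => rw [← Multiset.map_univ_coe S, Multiset.countP_map]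
  rfl

lemma subsingleton_toType_of_countP_le_one {S : Multiset α} {p : α → Prop}
    (h : S.countP p ≤ 1) : {x : S | p x.1}.Subsingleton := fun x hx y hy =>
  Finset.card_le_one.1 ((card_filter_toType S p).trans_le h) x
    ((Finset.mem_filter_univ _).2 hx) y ((Finset.mem_filter_univ _).2 hy)

lemma map_toType_le_of_injOn {S : Multiset α} {M : Finset γ} {f : γ → S}
    (hf : Set.InjOn f M) : M.val.map (fun z => (f z : α)) ≤ S :=
  calc M.val.map (fun z => (f z : α)) = (M.image f).val.map (fun x : S => (x : α)) := by
        rw [Finset.image_val_of_injOn hf, Multiset.map_map]; rfl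
    _ ≤ (Finset.univ : Finset S).val.map (fun x : S => (x : α)) :=
        Multiset.map_le_map (Finset.val_le_iff.2 (Finset.subset_univ _))
    _ = S := S.map_univ_coe

variable {a : α → Set ι} {b : β → Set ι} {S : Multiset α} {S' : Multiset β}

lemma IsTraceMatching.exists_multiset [Finite ι] {f : ι → S} {g : ι → S'}
    (h : IsTraceMatching (fun x : S => a x) (fun y : S' => b y) f g) :
    ∃ Q : Multiset (α × β), Q.map Prod.fst ≤ S ∧ Q.map Prod.snd ≤ S' ∧
      (∀ z ∈ Q, (a z.1 ∩ b z.2).Nonempty) ∧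
      ∀ e, Q.countP (fun z => e ∈ a z.1 ∩ b z.2) = 1 := by
  have := Fintype.ofFinite ι
  have hfg (e e') : f e' = f e ↔ g e' = g e := (h e e').1.trans (h e e').2.symm
  let M : Finset (S × S') := Finset.univ.image fun e => (f e, g e)
  have hM {z} : z ∈ M ↔ ∃ e, (f e, g e) = z := by simp [M]
  refine ⟨M.val.map (Prod.map (↑) (↑)), ?_, ?_, ?_, fun e => ?_⟩
  · rw [Multiset.map_map]
    refine map_toType_le_of_injOn (f := Prod.fst) fun z hz w hw hzw => ?_
    obtain ⟨e, rfl⟩ := hM.1 hz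
    obtain ⟨e', rfl⟩ := hM.1 hw
    exact Prod.ext hzw ((hfg _ _).1 hzw)
  · rw [Multiset.map_map]
    refine map_toType_le_of_injOn (f := Prod.snd) fun z hz w hw hzw => ?_
    obtain ⟨e, rfl⟩ := hM.1 hz
    obtain ⟨e', rfl⟩ := hM.1 hw
    exact Prod.ext ((hfg _ _).2 hzw) hzw
  · intro z hz
    obtain ⟨w, hw, rfl⟩ := Multiset.mem_map.1 hz
    obtain ⟨e, rfl⟩ := hM.1 hw
    exact ⟨e, (h e e).1.1 rfl⟩
  · rw [Multiset.countP_map, ← Finset.filter_val, Finset.card_val, Finset.card_eq_one]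
    refine ⟨(f e, g e), Finset.eq_singleton_iff_unique_mem.2
      ⟨Finset.mem_filter.2 ⟨hM.2 ⟨e, rfl⟩, (h e e).1.1 rfl⟩, fun z hz => ?_⟩⟩
    obtain ⟨hzM, hz⟩ := Finset.mem_filter.1 hz
    obtain ⟨e', rfl⟩ := hM.1 hzM
    exact Prod.ext ((h e' e).1.2 hz).symm ((h e' e).2.2 hz).symm

lemma exists_multiset_matching [Fintype ι] (h3 : Fintype.card ι = 3)
    (ha : ∀ e, S.countP (e ∈ a ·) = 2) (hb : ∀ e, S'.countP (e ∈ b ·) = 2)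
    (ha_univ : S.countP (a · = Set.univ) ≤ 1) (hb_univ : S'.countP (b · = Set.univ) ≤ 1) :
    ∃ Q : Multiset (α × β), Q.map Prod.fst ≤ S ∧ Q.map Prod.snd ≤ S' ∧
      (∀ z ∈ Q, (a z.1 ∩ b z.2).Nonempty) ∧
      ∀ e, Q.countP (fun z => e ∈ a z.1 ∩ b z.2) = 1 := by
  obtain ⟨f, g, hfg⟩ := exists_isTraceMatching (a := fun x : S => a x) (b := fun y : S' => b y) h3
    (fun e => by rw [card_filter_toType S (e ∈ a ·), ha])
    (fun e => by rw [card_filter_toType S' (e ∈ b ·), hb])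
    (subsingleton_toType_of_countP_le_one ha_univ) (subsingleton_toType_of_countP_le_one hb_univ)
  exact hfg.exists_multiset

end MultisetMatching

/-! ### Gluing cycle double covers along a triangle -/

section CycleCoverGluing

variable {V : Type*} {G : SimpleGraph V} {A B : Set V} {C D : G.Subgraph}

lemma IsCycleSubgraph.exists_adj (hC : IsCycleSubgraph C) {v : V} (hv : v ∈ C.verts) :
    ∃ w, C.Adj v w :=
  Set.nonempty_of_ncard_ne_zero (hC.2 v hv ▸ two_ne_zero)

lemma IsCycleSubgraph.verts_subset (hC : IsCycleSubgraph C) (h : C.edgeSet ⊆ edgesOn G A) :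
    C.verts ⊆ A := fun _ hv =>
  let ⟨_, hw⟩ := hC.exists_adj hv
  (mk_mem_edgesOn.1 (h hw)).2.1

lemma IsCycleSubgraph.le_of_edgeSet_subset (hC : IsCycleSubgraph C)
    (h : C.edgeSet ⊆ D.edgeSet) : C ≤ D :=
  ⟨fun _ hv => let ⟨_, hw⟩ := hC.exists_adj hv; D.edge_vert (@h s(_, _) hw),
    fun u v huv => @h s(u, v) huv⟩

lemma edgeSet_induce_top (A : Set V) : ((⊤ : G.Subgraph).induce A).edgeSet = edgesOn G A := by
  ext ⟨x, y⟩
  rw [mk_mem_edgesOn]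
  simp only [Subgraph.mem_edgeSet, Subgraph.induce_adj, Subgraph.top_adj]
  tauto

lemma isCycleSubgraph_induce_top_of_isClique (hA : G.IsClique A) (h3 : A.ncard = 3) :
    IsCycleSubgraph ((⊤ : G.Subgraph).induce A) := by
  refine ⟨?_, fun v hv => ?_⟩
  · rw [← induce_eq_coe_induce_top, induce_eq_top.2 hA]
    have : Nonempty ((⊤ : G.Subgraph).induce A).verts :=
      (Set.nonempty_of_ncard_ne_zero (h3 ▸ three_ne_zero)).to_subtype
    exact connected_top
  · have hN : ((⊤ : G.Subgraph).induce A).neighborSet v = A \ {v} := by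
      ext w
      exact ⟨fun h => ⟨h.2.1, h.2.2.ne'⟩, fun h => ⟨hv, h.1, hA hv h.1 (Ne.symm h.2)⟩⟩
    rw [hN, Set.ncard_sdiff_singleton_of_mem (Subgraph.induce_verts _ A ▸ hv), h3]

variable {S S' : Multiset G.Subgraph} {Q : Multiset (G.Subgraph × G.Subgraph)} {m : Sym2 V → ℕ}

lemma countP_mem_map_fst_add_countP_mem_map_snd (e : Sym2 V) :
    (Q.map Prod.fst).countP (e ∈ ·.edgeSet) + (Q.map Prod.snd).countP (e ∈ ·.edgeSet) =
      Q.countP (fun z => e ∈ symmDiff z.1.edgeSet z.2.edgeSet) +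
        2 * Q.countP (fun z => e ∈ z.1.edgeSet ∩ z.2.edgeSet) := by
  induction Q using Multiset.induction with
  | empty => simp
  | cons z Q ih =>
    simp only [Multiset.map_cons, Multiset.countP_cons, Set.mem_symmDiff, Set.mem_inter_iff] at ih ⊢
    grind

lemma exists_isCycleCover_countP_symmDiff [Finite V]
    (hQ : ∀ z ∈ Q, IsCycleSubgraph z.1 ∧ IsCycleSubgraph z.2 ∧
      (z.1.edgeSet ∩ z.2.edgeSet).Nonempty ∧ (z.1.verts ∩ z.2.verts).ncard ≤ 3) :
    ∃ R : Multiset G.Subgraph, Multiset.card R ≤ 2 * Multiset.card Q ∧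
      IsCycleCover R fun e => Q.countP fun z => e ∈ symmDiff z.1.edgeSet z.2.edgeSet := by
  induction Q using Multiset.induction with
  | empty => exact ⟨0, Nat.zero_le _, IsCycleCover.zero⟩
  | cons z Q ih =>
    obtain ⟨hz, hQ⟩ := Multiset.forall_mem_cons.1 hQ
    obtain ⟨R, hRcard, hR⟩ := ih hQ
    obtain ⟨R', hR'card, hR'⟩ := hz.1.exists_isCycleCover_symmDiff hz.2.1 hz.2.2.1 hz.2.2.2
    refine ⟨R + R', ?_, ?_⟩
    · rw [Multiset.card_add, Multiset.card_cons]
      omega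
    · convert hR.add hR' using 2 with e
      simp [Multiset.countP_cons, Set.indicator_apply]

lemma IsCycleCover.edgeSet_subset {F : Set (Sym2 V)} (hS : IsCycleCover S (F.indicator m))
    (hC : C ∈ S) : C.edgeSet ⊆ F := fun e he => by
  by_contra h
  have := hS.2 e
  rw [Set.indicator_of_notMem h, Multiset.countP_eq_zero] at this
  exact this C hC he

/-- A member containing all three edges of the triangle is the triangle itself, so each family has
at most one such member and the traces on the triangle can be matched. -/
lemma IsCycleCover.exists_matching [Finite V] (hS : IsCycleCover S ((edgesOn G A).indicator 2))
    (hS' : IsCycleCover S' ((edgesOn G B).indicator 2)) (hclique : G.IsClique (A ∩ B))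
    (h3 : (A ∩ B).ncard = 3)
    (hcount : S.count ((⊤ : G.Subgraph).induce (A ∩ B)) ≤ 1)
    (hcount' : S'.count ((⊤ : G.Subgraph).induce (A ∩ B)) ≤ 1) :
    ∃ Q : Multiset (G.Subgraph × G.Subgraph), Q.map Prod.fst ≤ S ∧ Q.map Prod.snd ≤ S' ∧
      (∀ z ∈ Q, (z.1.edgeSet ∩ z.2.edgeSet).Nonempty) ∧
      ∀ e, Q.countP (fun z => e ∈ z.1.edgeSet ∩ z.2.edgeSet) =
        (edgesOn G (A ∩ B)).indicator 1 e := by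
  have := Fintype.ofFinite (edgesOn G (A ∩ B))
  have hF : Fintype.card (edgesOn G (A ∩ B)) = 3 := by
    rw [← Nat.card_eq_fintype_card, Nat.card_coe_set_eq, ncard_edgesOn_of_isClique hclique, h3]
    rfl
  let trace : G.Subgraph → Set (edgesOn G (A ∩ B)) := fun C => (↑) ⁻¹' C.edgeSet
  have htriangle {C : G.Subgraph} (hC : IsCycleSubgraph C) (h : trace C = Set.univ) :
      (⊤ : G.Subgraph).induce (A ∩ B) = C := by
    have htri := isCycleSubgraph_induce_top_of_isClique hclique h3
    refine htri.eq_of_le hC (htri.le_of_edgeSet_subset ?_)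
    rw [edgeSet_induce_top]
    exact fun e he => h.superset (Set.mem_univ ⟨e, he⟩)
  have huniv {S : Multiset G.Subgraph} (hS : ∀ C ∈ S, IsCycleSubgraph C) :
      S.countP (trace · = Set.univ) ≤ S.count ((⊤ : G.Subgraph).induce (A ∩ B)) := by
    have hreplicate : S.filter (trace · = Set.univ) = Multiset.replicate _ _ :=
      Multiset.eq_replicate.2 ⟨(Multiset.countP_eq_card_filter ..).symm, fun C hC =>
        (htriangle (hS C (Multiset.mem_filter.1 hC).1) (Multiset.mem_filter.1 hC).2).symm⟩
    exact Multiset.le_count_iff_replicate_le.2 (hreplicate.symm.trans_le (Multiset.filter_le ..))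
  obtain ⟨Q, hQS, hQS', hne, hQ⟩ := exists_multiset_matching hF (a := trace) (b := trace)
    (fun e => (hS.2 e).trans (Set.indicator_of_mem (edgesOn_inter.subset e.2).1 _))
    (fun e => (hS'.2 e).trans (Set.indicator_of_mem (edgesOn_inter.subset e.2).2 _))
    ((huniv hS.1).trans hcount) ((huniv hS'.1).trans hcount')
  refine ⟨Q, hQS, hQS', fun z hz => (hne z hz).elim fun e he => ⟨e, he⟩, fun e => ?_⟩
  by_cases he : e ∈ edgesOn G (A ∩ B)
  · exact (hQ ⟨e, he⟩).trans (Set.indicator_of_mem he (1 : Sym2 V → ℕ)).symm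
  · rw [Set.indicator_of_notMem he, Multiset.countP_eq_zero]
    refine fun z hz hez => he (edgesOn_inter.superset ⟨?_, ?_⟩)
    · exact hS.edgeSet_subset (Multiset.mem_of_le hQS (Multiset.mem_map_of_mem _ hz)) hez.1
    · exact hS'.edgeSet_subset (Multiset.mem_of_le hQS' (Multiset.mem_map_of_mem _ hz)) hez.2

namespace IsSeparation

lemma symm (hAB : IsSeparation G A B) : IsSeparation G B A :=
  fun u hu v hv huv => (hAB v hv u hu huv.symm).symm

lemma indicator_edgesOn_union (hAB : IsSeparation G A B) (m : Sym2 V → ℕ) (e : Sym2 V) :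
    (edgesOn G (A ∪ B)).indicator m e + (edgesOn G (A ∩ B)).indicator m e =
      (edgesOn G A).indicator m e + (edgesOn G B).indicator m e := by
  rw [hAB.edgesOn_union, edgesOn_inter]
  exact Set.indicator_union_add_inter_apply ..

lemma isCycleCover_of_countP_add (hAB : IsSeparation G A B)
    (hS : IsCycleCover S ((edgesOn G A).indicator 2))
    (hS' : IsCycleCover S' ((edgesOn G B).indicator 2)) {R : Multiset G.Subgraph}
    (hR : ∀ C ∈ R, IsCycleSubgraph C)
    (hcount : ∀ e, R.countP (e ∈ ·.edgeSet) + (edgesOn G (A ∩ B)).indicator 2 e =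
      S.countP (e ∈ ·.edgeSet) + S'.countP (e ∈ ·.edgeSet)) :
    IsCycleCover R ((edgesOn G (A ∪ B)).indicator 2) :=
  ⟨hR, fun e => by
    have := hcount e
    rw [hS.2, hS'.2, ← hAB.indicator_edgesOn_union] at this
    exact Nat.add_right_cancel this⟩

/-- Two copies of the triangle itself cover its edges twice, so they can be dropped. -/
lemma exists_isCycleCover_of_two_le_count (hAB : IsSeparation G A B)
    (hS : IsCycleCover S ((edgesOn G A).indicator 2))
    (hS' : IsCycleCover S' ((edgesOn G B).indicator 2))
    (hcount : 2 ≤ S.count ((⊤ : G.Subgraph).induce (A ∩ B))) :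
    ∃ R : Multiset G.Subgraph, Multiset.card R ≤ Multiset.card S + Multiset.card S' ∧
      IsCycleCover R ((edgesOn G (A ∪ B)).indicator 2) := by
  obtain ⟨S₀, rfl⟩ := Multiset.le_iff_exists_add.1 (Multiset.le_count_iff_replicate_le.1 hcount)
  refine ⟨S₀ + S', ?_, hAB.isCycleCover_of_countP_add hS hS' (fun C hC => ?_) fun e => ?_⟩
  · simp only [Multiset.card_add]
    omega
  · exact (Multiset.mem_add.1 hC).elim (fun h => hS.1 C (Multiset.mem_add.2 (.inr h))) (hS'.1 C)
  · have htri : (Multiset.replicate 2 ((⊤ : G.Subgraph).induce (A ∩ B))).countP (e ∈ ·.edgeSet) =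
        (edgesOn G (A ∩ B)).indicator 2 e := by
      rw [← edgeSet_induce_top]
      simp only [Multiset.replicate_succ, Multiset.replicate_zero, Multiset.countP_cons,
        Multiset.countP_zero, Set.indicator_apply]
      split_ifs <;> rfl
    rw [Multiset.countP_add, Multiset.countP_add, htri]
    ring

lemma exists_isCycleCover_of_count_le_one [Finite V] (hAB : IsSeparation G A B)
    (hclique : G.IsClique (A ∩ B)) (h3 : (A ∩ B).ncard = 3)
    (hS : IsCycleCover S ((edgesOn G A).indicator 2))
    (hS' : IsCycleCover S' ((edgesOn G B).indicator 2))
    (hcount : S.count ((⊤ : G.Subgraph).induce (A ∩ B)) ≤ 1)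
    (hcount' : S'.count ((⊤ : G.Subgraph).induce (A ∩ B)) ≤ 1) :
    ∃ R : Multiset G.Subgraph, Multiset.card R ≤ Multiset.card S + Multiset.card S' ∧
      IsCycleCover R ((edgesOn G (A ∪ B)).indicator 2) := by
  obtain ⟨Q, hQS, hQS', hne, hQ⟩ := hS.exists_matching hS' hclique h3 hcount hcount'
  have hQ_cycle (z) (hz : z ∈ Q) : IsCycleSubgraph z.1 ∧ IsCycleSubgraph z.2 ∧
      (z.1.edgeSet ∩ z.2.edgeSet).Nonempty ∧ (z.1.verts ∩ z.2.verts).ncard ≤ 3 := by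
    have hz₁ := Multiset.mem_of_le hQS (Multiset.mem_map_of_mem _ hz)
    have hz₂ := Multiset.mem_of_le hQS' (Multiset.mem_map_of_mem _ hz)
    have hverts := Set.inter_subset_inter ((hS.1 _ hz₁).verts_subset (hS.edgeSet_subset hz₁))
      ((hS'.1 _ hz₂).verts_subset (hS'.edgeSet_subset hz₂))
    exact ⟨hS.1 _ hz₁, hS'.1 _ hz₂, hne z hz, (Set.ncard_le_ncard hverts).trans_eq h3⟩
  obtain ⟨R, hRcard, hR⟩ := exists_isCycleCover_countP_symmDiff hQ_cycle
  obtain ⟨S₁, rfl⟩ := Multiset.le_iff_exists_add.1 hQS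
  obtain ⟨S'₁, rfl⟩ := Multiset.le_iff_exists_add.1 hQS'
  refine ⟨R + (S₁ + S'₁), ?_, hAB.isCycleCover_of_countP_add hS hS' ?_ fun e => ?_⟩
  · simp only [Multiset.card_add, Multiset.card_map]
    omega
  · simp only [Multiset.mem_add]
    rintro C (hC | hC | hC)
    exacts [hR.1 C hC, hS.1 C (Multiset.mem_add.2 (.inr hC)),
      hS'.1 C (Multiset.mem_add.2 (.inr hC))]
  · have htwo : (edgesOn G (A ∩ B)).indicator 2 e =
        2 * Q.countP (fun z => e ∈ z.1.edgeSet ∩ z.2.edgeSet) := by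
      rw [hQ, Set.indicator_apply, Set.indicator_apply]
      split_ifs <;> rfl
    have hsum := countP_mem_map_fst_add_countP_mem_map_snd (Q := Q) e
    rw [htwo]
    simp only [Multiset.countP_add, hR.2]
    omega

theorem exists_isCycleCover [Finite V] (hAB : IsSeparation G A B)
    (hclique : G.IsClique (A ∩ B)) (h3 : (A ∩ B).ncard = 3)
    (hS : IsCycleCover S ((edgesOn G A).indicator 2))
    (hS' : IsCycleCover S' ((edgesOn G B).indicator 2)) :
    ∃ R : Multiset G.Subgraph, Multiset.card R ≤ Multiset.card S + Multiset.card S' ∧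
      IsCycleCover R ((edgesOn G (A ∪ B)).indicator 2) := by
  rcases Nat.lt_or_ge 1 (S.count ((⊤ : G.Subgraph).induce (A ∩ B))) with h | h
  · exact hAB.exists_isCycleCover_of_two_le_count hS hS' h
  rcases Nat.lt_or_ge 1 (S'.count ((⊤ : G.Subgraph).induce (A ∩ B))) with h' | h'
  · rw [Set.inter_comm] at h'
    rw [Set.union_comm, add_comm]
    exact hAB.symm.exists_isCycleCover_of_two_le_count hS' hS h'
  exact hAB.exists_isCycleCover_of_count_le_one hclique h3 hS hS' h h'

end IsSeparation

end CycleCoverGluing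

/-! ### The pieces of the decomposition -/

section Transfer

variable {V W : Type*} {G : SimpleGraph V} {H : SimpleGraph W}

lemma isCDC_iff_isCycleCover {S : Multiset G.Subgraph} :
    IsCDC G S ↔ IsCycleCover S (G.edgeSet.indicator 2) := by
  refine and_congr_right' ⟨fun h e => ?_, fun h e he => (h e).trans (Set.indicator_of_mem he _)⟩
  by_cases he : e ∈ G.edgeSet
  · rw [h e he, Set.indicator_of_mem he]
    rfl
  · rw [Set.indicator_of_notMem he, Multiset.countP_eq_zero]
    exact fun C _ heC => he (C.edgeSet_subset heC)

lemma IsCycleSubgraph.map {f : G →g H} (hf : Function.Injective f) {C : G.Subgraph}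
    (hC : IsCycleSubgraph C) : IsCycleSubgraph (C.map f) := by
  refine ⟨Connected.map (G := C.coe) ⟨fun v => ⟨f v, Set.mem_image_of_mem _ v.2⟩,
    fun {a b} h => ⟨a, b, h, rfl, rfl⟩⟩ ?_ hC.1, ?_⟩
  · rintro ⟨_, v, hv, rfl⟩
    exact ⟨⟨v, hv⟩, rfl⟩
  · rintro _ ⟨v, hv, rfl⟩
    have hN : (C.map f).neighborSet (f v) = f '' C.neighborSet v := by
      ext w
      constructor
      · rintro ⟨a, b, hab, ha, rfl⟩
        obtain rfl := hf ha
        exact ⟨b, hab, rfl⟩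
      · rintro ⟨b, hb, rfl⟩
        exact ⟨v, b, hb, rfl, rfl⟩
    rw [hN, Set.ncard_image_of_injective _ hf, hC.2 v hv]

lemma IsCDC.map {f : G →g H} (hf : Function.Injective f) {S : Multiset G.Subgraph}
    (hS : IsCDC G S) :
    IsCycleCover (S.map (Subgraph.map f)) ((Sym2.map f '' G.edgeSet).indicator 2) := by
  refine ⟨fun C hC => ?_, fun e => ?_⟩
  · obtain ⟨D, hD, rfl⟩ := Multiset.mem_map.1 hC
    exact (hS.1 D hD).map hf
  · simp only [Multiset.countP_map, ← Multiset.countP_eq_card_filter, Subgraph.edgeSet_map]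
    by_cases he : e ∈ Sym2.map f '' G.edgeSet
    · rw [Set.indicator_of_mem he]
      obtain ⟨e, he, rfl⟩ := he
      simp only [(Sym2.map.injective hf).mem_set_image]
      exact hS.2 e he
    · rw [Set.indicator_of_notMem he, Multiset.countP_eq_zero]
      exact fun C _ heC => he (Set.image_mono C.edgeSet_subset heC)

lemma image_edgeSet_of_iso (φ : G ≃g H) : Sym2.map φ '' G.edgeSet = H.edgeSet := by
  ext ⟨x, y⟩
  constructor
  · rintro ⟨⟨a, b⟩, hab, h⟩
    exact h ▸ φ.map_adj_iff.2 hab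
  · exact fun hxy => ⟨s(φ.symm x, φ.symm y), φ.symm.map_adj_iff.2 hxy, by simp⟩

lemma exists_isCDC_of_iso (φ : G ≃g H) {S : Multiset H.Subgraph} (hS : IsCDC H S) :
    ∃ S' : Multiset G.Subgraph, IsCDC G S' ∧ Multiset.card S' = Multiset.card S := by
  refine ⟨_, isCDC_iff_isCycleCover.2 ?_, Multiset.card_map (Subgraph.map φ.symm.toHom) S⟩
  rw [← image_edgeSet_of_iso φ.symm]
  exact hS.map φ.symm.injective

lemma IsCDC.map_induce {A : Set V} {S : Multiset (G.induce A).Subgraph}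
    (hS : IsCDC (G.induce A) S) :
    IsCycleCover (S.map (Subgraph.map (Embedding.induce A).toHom))
      ((edgesOn G A).indicator 2) := by
  rw [← image_edgeSet_induce]
  exact hS.map (f := (Embedding.induce A).toHom) Subtype.val_injective

variable [Fintype V] [Fintype W]

lemma IsKConnected.of_iso {k : ℕ} (φ : G ≃g H) (hG : IsKConnected k G) : IsKConnected k H := by
  refine ⟨hG.1.trans_eq φ.card_eq, fun s hs => ?_⟩
  have hpre : (φ ⁻¹' s).ncard < k := by
    rwa [Set.ncard_preimage_of_injective_subset_range φ.injective]
    simp [φ.surjective.range_eq]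
  refine Connected.map (induceHom φ.toHom (s := (φ ⁻¹' s)ᶜ) fun v hv => hv) ?_ (hG.2 _ hpre)
  rintro ⟨w, hw⟩
  exact ⟨⟨φ.symm w, by simpa using hw⟩, Subtype.ext (φ.apply_symm_apply w)⟩

lemma IsTriangulation.of_iso (φ : G ≃g H) (hG : IsTriangulation G) : IsTriangulation H := by
  refine ⟨hG.1.of_minor (.of_injective φ.symm.toHom φ.symm.injective), φ.card_eq ▸ hG.2.1, ?_⟩
  rw [← φ.card_eq, ← hG.2.2, ← Nat.card_coe_set_eq, ← Nat.card_coe_set_eq,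
    Nat.card_congr φ.mapEdgeSet]

end Transfer

section FourCycles

variable {V : Type*} {G : SimpleGraph V}

lemma exists_isCycleSubgraph_edgeSet_eq {a b c d : V} (hab : G.Adj a b) (hbc : G.Adj b c)
    (hcd : G.Adj c d) (hda : G.Adj d a) (hac : a ≠ c) (hbd : b ≠ d) :
    ∃ C : G.Subgraph, IsCycleSubgraph C ∧
      C.edgeSet = {s(a, b), s(b, c), s(c, d), s(d, a)} := by
  let p : G.Walk a a := .cons hab (.cons hbc (.cons hcd (.cons hda .nil)))
  have hp : p.IsCycle := by
    simp [p, Walk.cons_isCycle_iff, hab.ne, hab.ne', hbc.ne, hcd.ne, hda.ne, hda.ne', hac, hac.symm,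
      hbd]
  refine ⟨p.toSubgraph, isCycleSubgraph_toSubgraph hp, ?_⟩
  ext e
  simp only [p, Walk.mem_edges_toSubgraph, Walk.edges_cons, Walk.edges_nil, List.mem_cons,
    List.not_mem_nil, or_false, Set.mem_insert_iff, Set.mem_singleton_iff]

/-- The cover consists of the three Hamiltonian cycles. -/
lemma exists_isCDC_completeGraph_four : ∃ S : Multiset (completeGraph (Fin 4)).Subgraph,
    IsCDC (completeGraph (Fin 4)) S ∧ Multiset.card S = 3 := by
  have adj (i j : Fin 4) (h : i ≠ j) : (completeGraph (Fin 4)).Adj i j := h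
  obtain ⟨C₁, h₁, e₁⟩ := exists_isCycleSubgraph_edgeSet_eq (adj 0 1 (by decide))
    (adj 1 2 (by decide)) (adj 2 3 (by decide)) (adj 3 0 (by decide)) (by decide) (by decide)
  obtain ⟨C₂, h₂, e₂⟩ := exists_isCycleSubgraph_edgeSet_eq (adj 0 2 (by decide))
    (adj 2 1 (by decide)) (adj 1 3 (by decide)) (adj 3 0 (by decide)) (by decide) (by decide)
  obtain ⟨C₃, h₃, e₃⟩ := exists_isCycleSubgraph_edgeSet_eq (adj 0 1 (by decide))
    (adj 1 3 (by decide)) (adj 3 2 (by decide)) (adj 2 0 (by decide)) (by decide) (by decide)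
  refine ⟨{C₁, C₂, C₃}, ⟨by simp [h₁, h₂, h₃], fun e he => ?_⟩, rfl⟩
  induction e with
  | _ i j =>
    have hij : i ≠ j := he
    simp only [Multiset.insert_eq_cons, ← Multiset.cons_zero, Multiset.countP_cons,
      Multiset.countP_zero, e₁, e₂, e₃]
    clear he
    fin_cases i <;> fin_cases j <;> first | exact absurd rfl hij | simp

end FourCycles

section Pieces

variable {V : Type*} [Fintype V] {G : SimpleGraph V}

lemma eq_top_of_choose_two_le_ncard_edgeSet
    (h : (Fintype.card V).choose 2 ≤ G.edgeSet.ncard) : G = ⊤ := by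
  rw [← coe_edgeFinset, Set.ncard_coe_finset, ← card_edgeFinset_top_eq_card_choose_two] at h
  exact edgeFinset_inj.1 (Finset.eq_of_subset_of_card_le (edgeFinset_mono le_top) h)

lemma hasSepTriangle_top (hV : Fintype.card V = 3) : HasSepTriangle (⊤ : SimpleGraph V) := by
  obtain ⟨x, y, z, hxy, hxz, hyz, hx⟩ := Finset.card_eq_three.1 (Finset.card_univ.trans hV)
  refine ⟨x, y, z, hxy, hyz, hxz, fun hc => ?_⟩
  obtain ⟨⟨v, hvx, hvy, hvz⟩⟩ := hc.nonempty
  have hv : v ∈ ({x, y, z} : Finset V) := hx ▸ Finset.mem_univ v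
  simp [hvx, hvy, hvz] at hv

lemma IsTriangulation.iso_completeGraph_four_or_isKConnected_four (hG : IsTriangulation G)
    (hsep : ¬ HasSepTriangle G) :
    Nonempty (G ≃g completeGraph (Fin 4)) ∨ IsKConnected 4 G := by
  obtain ⟨hplanar, h3, hE⟩ := hG
  obtain h5 | h5 := Nat.lt_or_ge (Fintype.card V) 5
  · have htop : G = ⊤ := by
      apply eq_top_of_choose_two_le_ncard_edgeSet
      interval_cases Fintype.card V <;> simp only [Nat.choose] <;> omega
    subst htop
    obtain hV | hV : Fintype.card V = 3 ∨ Fintype.card V = 4 := by omega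
    · exact absurd (hasSepTriangle_top hV) hsep
    · exact .inl ⟨Iso.completeGraph (Fintype.equivFinOfCardEq hV)⟩
  · exact .inr (isKConnected_four hplanar.1 h5 hE hsep)

/-- The hypothesis of the theorem: every `4`-connected triangulation on `m` vertices has a cycle
double cover of size at most `m - 2`. Vertex types are restricted to `Type`. -/
def FourConnectedCDCBound : Prop :=
  ∀ (W : Type) [Fintype W] (G : SimpleGraph W), IsTriangulation G → IsKConnected 4 G →
    ∃ S : Multiset G.Subgraph, IsCDC G S ∧ Multiset.card S + 2 ≤ Fintype.card W

lemma FourConnectedCDCBound.exists_isCDC (hyp : FourConnectedCDCBound) (hG : IsTriangulation G)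
    (h4 : IsKConnected 4 G) :
    ∃ S : Multiset G.Subgraph, IsCDC G S ∧ Multiset.card S + 2 ≤ Fintype.card V := by
  have φ := G.overFinIso rfl
  obtain ⟨S, hS, hcard⟩ := hyp _ _ (hG.of_iso φ) (h4.of_iso φ)
  obtain ⟨S', hS', hcard'⟩ := exists_isCDC_of_iso φ hS
  rw [← hcard', ← φ.card_eq] at hcard
  exact ⟨S', hS', hcard⟩

end Pieces

section Decomposition

variable {V : Type*} {T : SimpleGraph V} {a b s : Finset V} {P Q : Multiset (Finset V)}

lemma isTriangulation_induce_iff (hT : IsPlanar T) :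
    IsTriangulation (T.induce (s : Set V)) ↔
      3 ≤ s.card ∧ (edgesOn T s).ncard + 6 = 3 * s.card := by
  have hs : Fintype.card (s : Set V) = s.card := Fintype.card_coe s
  rw [IsTriangulation, ncard_edgeSet_induce, hs]
  exact and_iff_right (hT.of_minor (hasGraphMinor_induce T s))

/-- The upper bound of the theorem, as a function of the multiset of (vertex sets of) pieces. -/
noncomputable def pieceBound (T : SimpleGraph V) (P : Multiset (Finset V)) : ℕ∞ :=
  ((3 * P.countP (fun s : Finset V =>
      Nonempty ((T.induce (s : Set V)) ≃g completeGraph (Fin 4))) : ℕ) : ℕ∞) +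
    ((P.filter (fun s : Finset V => IsKConnected 4 (T.induce (s : Set V)))).map
      (fun s : Finset V => ((Finset.card s - 2 : ℕ) : ℕ∞))).sum

lemma pieceBound_add : pieceBound T (P + Q) = pieceBound T P + pieceBound T Q := by
  simp only [pieceBound, Multiset.countP_add, Multiset.filter_add, Multiset.map_add,
    Multiset.sum_add, Nat.mul_add, Nat.cast_add]
  exact add_add_add_comm _ _ _ _

lemma three_le_pieceBound_singleton
    (hs : Nonempty (T.induce (s : Set V) ≃g completeGraph (Fin 4))) : 3 ≤ pieceBound T {s} := by
  rw [pieceBound, ← Multiset.cons_zero, Multiset.countP_cons_of_pos (p := fun s : Finset V =>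
    Nonempty ((T.induce (s : Set V)) ≃g completeGraph (Fin 4))) _ hs]
  exact le_self_add

lemma card_sub_two_le_pieceBound_singleton (hs : IsKConnected 4 (T.induce (s : Set V))) :
    ((s.card - 2 : ℕ) : ℕ∞) ≤ pieceBound T {s} := by
  rw [pieceBound, Multiset.filter_singleton, if_pos hs, Multiset.map_singleton,
    Multiset.sum_singleton]
  exact le_add_self

lemma FourConnectedCDCBound.exists_isCDC_induce (hyp : FourConnectedCDCBound)
    (hs : IsTriangulation (T.induce (s : Set V)))
    (hsep : ¬ HasSepTriangle (T.induce (s : Set V))) :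
    ∃ S : Multiset (T.induce (s : Set V)).Subgraph, IsCDC (T.induce (s : Set V)) S ∧
      (Multiset.card S : ℕ∞) ≤ pieceBound T {s} := by
  obtain hK | h4 := hs.iso_completeGraph_four_or_isKConnected_four hsep
  · obtain ⟨φ⟩ := id hK
    obtain ⟨S, hS, hcard⟩ := exists_isCDC_completeGraph_four
    obtain ⟨S', hS', hcard'⟩ := exists_isCDC_of_iso φ hS
    exact ⟨S', hS', by simpa [hcard', hcard] using three_le_pieceBound_singleton hK⟩
  · obtain ⟨S, hS, hcard⟩ := hyp.exists_isCDC hs h4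
    have hcard' : Multiset.card S ≤ s.card - 2 :=
      Nat.le_sub_of_add_le (hcard.trans_eq (Fintype.card_coe s))
    exact ⟨S, hS, (Nat.cast_le.2 hcard').trans (card_sub_two_le_pieceBound_singleton h4)⟩

lemma IsCDC.cdcMin_le {S : Multiset T.Subgraph} (hS : IsCDC T S) : cdcMin T ≤ Multiset.card S :=
  sInf_le ⟨S, hS, rfl⟩

variable [Finite V]

/-- The edge bound holds for both parts, and the bounds add up to an equality. -/
lemma IsSeparation.isTriangulation_induce (hab : IsSeparation T (a : Set V) b)
    (hclique : T.IsClique ((a : Set V) ∩ b)) (h3 : (a ∩ b).card = 3) (hT : IsPlanar T)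
    (htri : IsTriangulation (T.induce ((a ∪ b : Finset V) : Set V))) :
    IsTriangulation (T.induce (a : Set V)) ∧ IsTriangulation (T.induce (b : Set V)) := by
  simp only [isTriangulation_induce_iff hT, Finset.coe_union] at htri ⊢
  have ha3 : 3 ≤ a.card := h3 ▸ Finset.card_le_card Finset.inter_subset_left
  have hb3 : 3 ≤ b.card := h3 ▸ Finset.card_le_card Finset.inter_subset_right
  have hbound {s : Finset V} (hs : 3 ≤ s.card) : (edgesOn T s).ncard + 6 ≤ 3 * s.card := by
    simpa only [Set.ncard_coe_finset] using ncard_edgesOn_add_six_le (A := (s : Set V))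
      (hT.of_minor (hasGraphMinor_induce T s)).1 (by rwa [Set.ncard_coe_finset])
  have hinter : (edgesOn T ((a : Set V) ∩ b)).ncard = 3 := by
    rw [ncard_edgesOn_of_isClique hclique, ← Finset.coe_inter, Set.ncard_coe_finset, h3]
    rfl
  have hedges := hab.ncard_edgesOn_union
  have hverts := Finset.card_union_add_card_inter a b
  have ha := hbound ha3
  have hb := hbound hb3
  omega

theorem IsPieceDecomp.exists_isCycleCover (hyp : FourConnectedCDCBound) (hT : IsPlanar T)
    (hP : IsPieceDecomp T s P) (hs : IsTriangulation (T.induce (s : Set V))) :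
    ∃ S : Multiset T.Subgraph, IsCycleCover S ((edgesOn T s).indicator 2) ∧
      (Multiset.card S : ℕ∞) ≤ pieceBound T P := by
  induction hP with
  | base s hsep =>
    obtain ⟨S, hS, hcard⟩ := hyp.exists_isCDC_induce hs hsep
    exact ⟨_, hS.map_induce, (Multiset.card_map _ S).symm ▸ hcard⟩
  | split s a b P Q hab _ _ h3 hclique hcross _ _ ihP ihQ =>
    subst hab
    have hsep : IsSeparation T (a : Set V) b := hcross
    have htriangle : T.IsClique ((a : Set V) ∩ b) := fun u hu v hv =>
      hclique u (Finset.mem_inter.2 hu) v (Finset.mem_inter.2 hv)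
    obtain ⟨ha, hb⟩ := hsep.isTriangulation_induce htriangle h3 hT hs
    obtain ⟨S, hS, hSP⟩ := ihP ha
    obtain ⟨S', hS', hSQ⟩ := ihQ hb
    obtain ⟨R, hcard, hR⟩ := hsep.exists_isCycleCover htriangle
      (by rw [← Finset.coe_inter, Set.ncard_coe_finset, h3]) hS hS'
    refine ⟨R, by rwa [Finset.coe_union], ?_⟩
    calc (Multiset.card R : ℕ∞) ≤ Multiset.card S + Multiset.card S' := mod_cast hcard
      _ ≤ pieceBound T P + pieceBound T Q := add_le_add hSP hSQ
      _ = pieceBound T (P + Q) := pieceBound_add.symm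

end Decomposition

/-- Assuming every planar 4-connected triangulation on `m` vertices has a CDC of size at
most `m - 2`, every plane triangulation `T` satisfies
`c(T) ≤ 3·|𝒫_{K₄}(T)| + Σ_{G ∈ 𝒫₄(T)} (|V(G)| - 2)`, where `𝒫_{K₄}(T)` are the pieces
isomorphic to `K₄` and `𝒫₄(T)` the 4-connected pieces. -/
theorem statement_12
    (hyp : ∀ (W : Type) [Fintype W] (G : SimpleGraph W),
      IsTriangulation G → IsKConnected 4 G →
        ∃ S : Multiset G.Subgraph, IsCDC G S ∧
          Multiset.card S + 2 ≤ Fintype.card W)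
    {V : Type*} [Fintype V] (T : SimpleGraph V)
    (hT : IsTriangulation T)
    (P : Multiset (Finset V)) (hP : IsPieceDecomp T Finset.univ P) :
    cdcMin T ≤
      ((3 * P.countP (fun s : Finset V =>
            Nonempty ((T.induce (s : Set V)) ≃g completeGraph (Fin 4))) : ℕ) : ℕ∞) +
      ((P.filter (fun s : Finset V => IsKConnected 4 (T.induce (s : Set V)))).map
          (fun s : Finset V => ((Finset.card s - 2 : ℕ) : ℕ∞))).sum := by
  have huniv : IsTriangulation (T.induce ((Finset.univ : Finset V) : Set V)) :=
    (isTriangulation_induce_iff hT.1).2 (by simpa [edgesOn_univ] using hT.2)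
  obtain ⟨S, hS, hcard⟩ := hP.exists_isCycleCover hyp hT.1 huniv
  rw [Finset.coe_univ, edgesOn_univ, ← isCDC_iff_isCycleCover] at hS
  exact hS.cdcMin_le.trans hcard
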